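/- arXiv:2108.04756 — 13 statements merged into one kernel-verified Lean document; each statement's English description precedes it below -/
import Mathlib

section
/- Let n ≥ 2, let a₁,...,aₙ and d₁,...,dₙ be positive integers, and let b be a nonnegative integer. Let Q(c) denote the number of tuples (x₁,...,xₙ) of nonnegative integers with ∑_{i=1}^n (dᵢaᵢ)xᵢ = c (and Q(c) = 0 for c < 0). Then P(b) = ∑_{t₁=0}^{d₁−1} ∑_{t₂=0}^{d₂−1} ⋯ ∑_{tₙ=0}^{dₙ−1} Q(b − ∑_{i=1}^n aᵢtᵢ). -/
/-!
Division with remainder by `dᵢ` in each coordinate, `xᵢ = dᵢ yᵢ + tᵢ` with `0 ≤ tᵢ < dᵢ`, is a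
bijection between the solutions `x` of `∑ aᵢxᵢ = b` and the pairs `(t, y)` where `t` lies in the
box `∏ [0, dᵢ)` and `∑ (dᵢaᵢ)yᵢ = b - ∑ aᵢtᵢ` (`solutionEquiv`). Taking cardinalities gives
the identity. Since `Nat.card` of an infinite type is `0`, counting the disjoint union over `t`
fibrewise also needs each fibre to be finite, which holds because positive coefficients bound
every coordinate (`finite_solutions`).
-/

lemma finite_solutions {n : ℕ} (a : Fin n → ℕ) (ha : ∀ i, 0 < a i) (c : ℤ) :
    Finite {x : Fin n → ℕ // ∑ i, (a i : ℤ) * x i = c} := by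
  refine ((Set.finite_Iic (fun _ : Fin n => c.toNat)).subset ?_).to_subtype
  intro x hx i
  have hx' : ∑ i, (a i : ℤ) * x i = c := hx
  have h1 : (a i : ℤ) * x i ≤ ∑ i, (a i : ℤ) * x i :=
    Finset.single_le_sum (f := fun i => (a i : ℤ) * x i) (fun _ _ => by positivity)
      (Finset.mem_univ i)
  have h2 : (x i : ℤ) ≤ (a i : ℤ) * x i :=
    le_mul_of_one_le_left (by positivity) (by exact_mod_cast ha i)
  change x i ≤ c.toNat
  omega

/-- Coordinatewise division with remainder: `x` corresponds to the remainders `xᵢ % dᵢ`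
together with the quotients `xᵢ / dᵢ`. -/
def solutionEquiv {n : ℕ} (a d : Fin n → ℕ) (hd : ∀ i, 0 < d i) (b : ℤ) :
    {x : Fin n → ℕ // ∑ i, (a i : ℤ) * x i = b} ≃
      Σ t : Fintype.piFinset (fun i => Finset.range (d i)),
        {y : Fin n → ℕ //
          ∑ i, ((d i * a i : ℕ) : ℤ) * y i = b - ∑ i, (a i : ℤ) * t.1 i} where
  toFun x := ⟨⟨fun i => x.1 i % d i, by
      simpa [Fintype.mem_piFinset] using fun i => Nat.mod_lt (x.1 i) (hd i)⟩,
    ⟨fun i => x.1 i / d i, by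
      rw [eq_sub_iff_add_eq, ← Finset.sum_add_distrib]
      refine (Finset.sum_congr rfl fun i _ => ?_).trans x.2
      have h : (d i : ℤ) * (x.1 i / d i : ℕ) + (x.1 i % d i : ℕ) = x.1 i := by
        exact_mod_cast Nat.div_add_mod (x.1 i) (d i)
      rw [← h, Nat.cast_mul]
      ring⟩⟩
  invFun p := ⟨fun i => d i * p.2.1 i + p.1.1 i, by
    have h := p.2.2
    rw [eq_sub_iff_add_eq, ← Finset.sum_add_distrib] at h
    refine (Finset.sum_congr rfl fun i _ => ?_).trans h
    push_cast
    ring⟩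
  left_inv x := Subtype.ext (funext fun i => Nat.div_add_mod (x.1 i) (d i))
  right_inv := by
    rintro ⟨⟨t, ht⟩, ⟨y, hy⟩⟩
    have hlt : ∀ i, t i < d i := by simpa [Fintype.mem_piFinset] using ht
    have hmod : (fun i => (d i * y i + t i) % d i) = t := by
      funext i
      rw [Nat.mul_add_mod, Nat.mod_eq_of_lt (hlt i)]
    have hdiv : (fun i => (d i * y i + t i) / d i) = y := by
      funext i
      rw [Nat.mul_add_div (hd i), Nat.div_eq_of_lt (hlt i), add_zero]
    -- The type of the second component depends on `t` only through the constraint on `y`.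
    exact Sigma.subtype_ext (Subtype.ext hmod) hdiv

/-- `P(b) = ∑_{t₁=0}^{d₁-1} ⋯ ∑_{tₙ=0}^{dₙ-1} Q(b - ∑ aᵢtᵢ)`, where `Q(c)` counts
nonnegative solutions of `∑ (dᵢaᵢ)xᵢ = c`. -/
theorem stmt_1 (n : ℕ) (hn : 2 ≤ n) (a d : Fin n → ℕ)
    (ha : ∀ i, 0 < a i) (hd : ∀ i, 0 < d i) (b : ℕ)
    (P : ℤ → ℕ)
    (hP : ∀ c : ℤ, P c = Nat.card {x : Fin n → ℕ // ∑ i, (a i : ℤ) * x i = c})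
    (Q : ℤ → ℕ)
    (hQ : ∀ c : ℤ, Q c = Nat.card {x : Fin n → ℕ // ∑ i, ((d i * a i : ℕ) : ℤ) * x i = c}) :
    P (b : ℤ) =
      ∑ t ∈ Fintype.piFinset (fun i => Finset.range (d i)),
        Q ((b : ℤ) - ∑ i, (a i : ℤ) * t i) := by
  have hfin : ∀ t : Fintype.piFinset (fun i => Finset.range (d i)),
      Finite {y : Fin n → ℕ //
        ∑ i, ((d i * a i : ℕ) : ℤ) * y i = (b : ℤ) - ∑ i, (a i : ℤ) * t.1 i} :=
    fun t => finite_solutions (fun i => d i * a i) (fun i => Nat.mul_pos (hd i) (ha i)) _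
  rw [hP, Nat.card_congr (solutionEquiv a d hd b), Nat.card_sigma,
    ← Finset.sum_coe_sort _ (fun t : Fin n → ℕ => Q ((b : ℤ) - ∑ i, (a i : ℤ) * (t i : ℤ)))]
  exact Finset.sum_congr rfl fun t _ => (hQ _).symm
end

section
/- Let n ≥ 2, let a₁,...,aₙ and c₁,...,cₙ be positive integers, and let b be a nonnegative integer. Let M = lcm(a₁,...,aₙ), let r be the remainder of b modulo M, and set s̄ = ⌊∑_{i=1}^n cᵢ − (∑_{i=1}^n aᵢ + r)/M⌋. Let Q(d) denote the number of tuples (x₁,...,xₙ) of nonnegative integers with ∑_{i=1}^n cᵢxᵢ = d (and Q(d) = 0 for d < 0), and for each integer k ≥ 0 set m_k = ∑_{S ⊆ {1,...,n}} (−1)^{|S|} · P(r + kM − M·∑_{i∈S} cᵢ). Then P(b) = ∑_{k=0}^{s̄} m_k · Q(⌊b/M⌋ − k), where the sum is empty if s̄ < 0. (In particular m₀ = P(r).) -/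
/-!
Write `F_w = ∏ᵢ 1 / (1 - X ^ wᵢ)` for the power series counting the nonnegative solutions of
`∑ wᵢ xᵢ = d`. Put `N = M c` and `G = ∏ᵢ (1 - X ^ Nᵢ) · F_a`, so that `F_a = G · F_N`.

* `F_N` is supported on multiples of `M`, and its coefficient at `M j` is `Q j`. Comparing
  coefficients of `X ^ b` in `F_a = G · F_N` thus involves only the coefficients of `G` at the
  exponents `r + k M`, the one at `r + k M` being paired with `Q (⌊b / M⌋ - k)`.
* Expanding `∏ᵢ (1 - X ^ Nᵢ)` over subsets shows that the coefficient of `G` at `r + k M` is `m_k`.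
* Each `aᵢ` divides `Nᵢ`, so `G` is a product of finite geometric sums: a polynomial of degree at
  most `∑ Nᵢ - ∑ aᵢ`. Hence `m_k = 0` as soon as `k > ∑ cᵢ - (∑ aᵢ + r) / M`.
-/

/-- The number of tuples of nonnegative integers `x` with `∑ wᵢ xᵢ = e`. When the solution set is
infinite `Nat.card` returns `0`, so this is meaningful only for positive weights. -/
noncomputable def count {n : ℕ} (w : Fin n → ℕ) (e : ℤ) : ℕ :=
  Nat.card {x : Fin n → ℕ // ∑ i, (w i : ℤ) * x i = e}

/-- The power series `∑ X ^ (w j)` over `j ≥ 0`, that is `1 / (1 - X ^ w)` for `w > 0`. -/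
noncomputable def geo (w : ℕ) : PowerSeries ℤ := PowerSeries.mk fun k => if w ∣ k then 1 else 0

/-- The generating function `∏ᵢ 1 / (1 - X ^ wᵢ)` of `count w`. -/
noncomputable def gen {n : ℕ} (w : Fin n → ℕ) : PowerSeries ℤ := ∏ i, geo (w i)

lemma count_of_neg {n : ℕ} (w : Fin n → ℕ) {e : ℤ} (he : e < 0) : count w e = 0 := by
  have : IsEmpty {x : Fin n → ℕ // ∑ i, (w i : ℤ) * x i = e} := by
    refine ⟨fun ⟨x, hx⟩ => ?_⟩
    have : 0 ≤ ∑ i, (w i : ℤ) * x i := Finset.sum_nonneg fun i _ => by positivity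
    omega
  simp [count]

lemma count_mul {n : ℕ} (M : ℕ) (hM : 0 < M) (c : Fin n → ℕ) (j : ℤ) :
    count (fun i => M * c i) (M * j) = count c j := by
  unfold count
  refine Nat.card_congr (Equiv.subtypeEquivRight fun x => ?_)
  have : ∑ i, ((M * c i : ℕ) : ℤ) * x i = M * ∑ i, (c i : ℤ) * x i := by
    rw [Finset.mul_sum]
    exact Finset.sum_congr rfl fun i _ => by push_cast; ring
  rw [this]
  exact mul_right_inj' (by positivity)

lemma dvd_of_count_ne_zero {n : ℕ} (M : ℕ) (c : Fin n → ℕ) (d : ℕ)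
    (h : count (fun i => M * c i) d ≠ 0) : M ∣ d := by
  have hne : Nonempty {x : Fin n → ℕ // ∑ i, ((M * c i : ℕ) : ℤ) * x i = d} :=
    (Nat.card_ne_zero.mp h).1
  obtain ⟨x, hx⟩ := hne
  have : ∑ i, (M * c i) * x i = d := by exact_mod_cast hx
  rw [← this]
  exact Finset.dvd_sum fun i _ => ⟨c i * x i, by ring⟩

lemma one_sub_mul_geo {w : ℕ} (hw : 0 < w) : (1 - PowerSeries.X ^ w) * geo w = 1 := by
  ext d
  rw [sub_mul, one_mul, map_sub, PowerSeries.coeff_X_pow_mul']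
  simp only [geo, PowerSeries.coeff_mk, PowerSeries.coeff_one]
  rcases Nat.eq_zero_or_pos d with rfl | hd
  · simp [hw.ne']
  · by_cases h : w ≤ d
    · have : w ∣ d - w ↔ w ∣ d := (Nat.dvd_sub_iff_left h dvd_rfl)
      simp only [h, hd.ne', this, if_true, if_false, sub_self]
    · have : ¬ w ∣ d := fun h' => h (Nat.le_of_dvd hd h')
      simp [h, hd.ne', this]

lemma coeff_gen {n : ℕ} (w : Fin n → ℕ) (hw : ∀ i, 0 < w i) (d : ℕ) :
    PowerSeries.coeff d (gen w) = (count w d : ℤ) := by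
  have h1 : ∀ l : Fin n →₀ ℕ, (∏ i, PowerSeries.coeff (l i) (geo (w i)) : ℤ)
      = if ∀ i, w i ∣ l i then 1 else 0 := by
    intro l
    simp only [geo, PowerSeries.coeff_mk]
    rw [Finset.prod_ite_zero]
    simp
  rw [gen, PowerSeries.coeff_prod, Finset.sum_congr rfl fun l _ => h1 l, Finset.sum_boole,
    count, ← Nat.card_eq_finsetCard]
  congr 1
  -- a solution `x` corresponds to the family of exponents `wᵢ xᵢ`
  refine Nat.card_congr
    { toFun := fun l => ⟨fun i => l.1 i / w i, ?_⟩
      invFun := fun x => ⟨Finsupp.equivFunOnFinite.symm fun i => w i * x.1 i, ?_⟩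
      left_inv := ?_
      right_inv := ?_ }
  · obtain ⟨l, hl⟩ := l
    simp only [Finset.mem_filter, Finset.mem_finsuppAntidiag] at hl
    refine Eq.trans ?_ (congrArg Nat.cast hl.1.1)
    push_cast
    refine Finset.sum_congr rfl fun i _ => ?_
    exact_mod_cast Nat.mul_div_cancel' (hl.2 i)
  · obtain ⟨x, hx⟩ := x
    simp only [Finset.mem_filter, Finset.mem_finsuppAntidiag]
    refine ⟨⟨?_, Finset.subset_univ _⟩, fun i => ?_⟩
    · simp only [Finsupp.equivFunOnFinite_symm_apply_apply]
      exact_mod_cast hx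
    · simp
  · rintro ⟨l, hl⟩
    simp only [Finset.mem_filter] at hl
    ext i
    simpa using Nat.mul_div_cancel' (hl.2 i)
  · rintro ⟨x, hx⟩
    ext i
    simp [hw i]

lemma prod_one_sub_mul_gen {n : ℕ} (w : Fin n → ℕ) (hw : ∀ i, 0 < w i) :
    (∏ i, (1 - PowerSeries.X ^ w i)) * gen w = 1 := by
  rw [gen, ← Finset.prod_mul_distrib]
  exact Finset.prod_eq_one fun i _ => one_sub_mul_geo (hw i)

/-- The series `∏ᵢ (1 - X ^ Nᵢ) / (1 - X ^ aᵢ)`. -/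
noncomputable def quot {n : ℕ} (a N : Fin n → ℕ) : PowerSeries ℤ :=
  (∏ i, (1 - PowerSeries.X ^ N i)) * gen a

lemma coeff_quot {n : ℕ} (a N : Fin n → ℕ) (ha : ∀ i, 0 < a i) (d : ℕ) :
    PowerSeries.coeff d (quot a N) =
      ∑ S : Finset (Fin n), (-1 : ℤ) ^ S.card * (count a (d - ∑ i ∈ S, (N i : ℤ)) : ℤ) := by
  rw [quot, Finset.prod_sub, Finset.sum_mul, map_sum, Finset.powerset_univ]
  refine Finset.sum_congr rfl fun S _ => ?_
  have h : ((-1 : PowerSeries ℤ) ^ S.card) = PowerSeries.C ((-1 : ℤ) ^ S.card) := by simp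
  rw [Finset.prod_const_one, mul_one, Finset.prod_pow_eq_pow_sum, h, mul_assoc,
    PowerSeries.coeff_C_mul, PowerSeries.coeff_X_pow_mul']
  congr 1
  have hc : ∑ i ∈ S, (N i : ℤ) = ((∑ i ∈ S, N i : ℕ) : ℤ) := by push_cast; rfl
  rw [hc]
  split_ifs with hle
  · rw [coeff_gen a ha, Nat.cast_sub hle]
  · rw [count_of_neg a (by omega)]
    rfl

/-- If `aᵢ ∣ Nᵢ` for all `i`, then `∏ᵢ (1 - X ^ Nᵢ) / (1 - X ^ aᵢ)` is a polynomial of degree at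
most `∑ Nᵢ - ∑ aᵢ`. -/
lemma coeff_quot_eq_zero {n : ℕ} (a N : Fin n → ℕ) (ha : ∀ i, 0 < a i) (hN : ∀ i, 0 < N i)
    (hdvd : ∀ i, a i ∣ N i) (d : ℕ) (hd : ∑ i, N i < d + ∑ i, a i) :
    PowerSeries.coeff d (quot a N) = 0 := by
  choose k hk using hdvd
  have hk0 : ∀ i, 0 < k i := fun i => Nat.pos_of_ne_zero fun h => by
    have := hN i
    rw [hk i, h] at this
    simp at this
  let p : Fin n → Polynomial ℤ := fun i => ∑ j ∈ Finset.range (k i), (Polynomial.X ^ a i) ^ j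
  have hp : quot a N = ((∏ i, p i : Polynomial ℤ) : PowerSeries ℤ) := by
    rw [quot, gen, ← Finset.prod_mul_distrib, ← Polynomial.coeToPowerSeries.ringHom_apply,
      map_prod]
    refine Finset.prod_congr rfl fun i _ => ?_
    have h1 : (1 - PowerSeries.X ^ N i : PowerSeries ℤ)
        = (∑ j ∈ Finset.range (k i), (PowerSeries.X ^ a i) ^ j) * (1 - PowerSeries.X ^ a i) := by
      rw [geom_sum_mul_neg, ← pow_mul, ← hk i]
    rw [h1, mul_assoc, one_sub_mul_geo (ha i), mul_one]
    simp [p, map_sum, map_pow]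
  have hdeg : ∀ i, (p i).natDegree + a i ≤ N i := by
    intro i
    have h1 : (p i).natDegree ≤ a i * (k i - 1) := by
      refine Polynomial.natDegree_sum_le_of_forall_le _ _ fun j hj => ?_
      rw [← pow_mul, Polynomial.natDegree_X_pow]
      have := Finset.mem_range.mp hj
      exact Nat.mul_le_mul_left _ (by omega)
    have h2 : a i * (k i - 1) + a i = N i := by
      rw [hk i]
      obtain ⟨q, hq⟩ := Nat.exists_eq_succ_of_ne_zero (hk0 i).ne'
      rw [hq, Nat.succ_sub_one, Nat.mul_succ]
    omega
  rw [hp, Polynomial.coeff_coe]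
  apply Polynomial.coeff_eq_zero_of_natDegree_lt
  have h1 := Polynomial.natDegree_prod_le Finset.univ p
  have h2 : ∑ i, (p i).natDegree + ∑ i, a i ≤ ∑ i, N i := by
    rw [← Finset.sum_add_distrib]
    exact Finset.sum_le_sum fun i _ => hdeg i
  omega

/-- Theorem 2.1: with `M = lcm(a₁,…,aₙ)`, `r = b mod M`,
`s̄ = ⌊∑cᵢ − (∑aᵢ + r)/M⌋` and
`m_k = ∑_{S ⊆ {1,…,n}} (−1)^{|S|} P(r + kM − M ∑_{i∈S} cᵢ)`, we have
`P(b) = ∑_{k=0}^{s̄} m_k Q(⌊b/M⌋ − k)` (empty sum if `s̄ < 0`); in particular `m₀ = P(r)`. -/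
theorem stmt_2 (n : ℕ) (hn : 2 ≤ n) (a c : Fin n → ℕ)
    (ha : ∀ i, 0 < a i) (hc : ∀ i, 0 < c i) (b : ℕ)
    (M : ℕ) (hM : M = Finset.univ.lcm a)
    (r : ℕ) (hr : r = b % M)
    (P : ℤ → ℕ)
    (hP : ∀ e : ℤ, P e = Nat.card {x : Fin n → ℕ // ∑ i, (a i : ℤ) * x i = e})
    (Q : ℤ → ℕ)
    (hQ : ∀ e : ℤ, Q e = Nat.card {x : Fin n → ℕ // ∑ i, (c i : ℤ) * x i = e})
    (sbar : ℤ)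
    (hsbar : sbar = ⌊(∑ i, (c i : ℚ)) - ((∑ i, (a i : ℚ)) + r) / M⌋)
    (m : ℤ → ℤ)
    (hm : ∀ k : ℤ, m k =
      ∑ S : Finset (Fin n),
        (-1 : ℤ) ^ S.card * (P ((r : ℤ) + k * M - M * ∑ i ∈ S, (c i : ℤ)) : ℤ)) :
    (P (b : ℤ) : ℤ) =
        ∑ k ∈ Finset.Icc (0 : ℤ) sbar, m k * (Q (((b / M : ℕ) : ℤ) - k) : ℤ) ∧
      m 0 = (P (r : ℤ) : ℤ) := by
  obtain rfl : P = count a := funext hP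
  obtain rfl : Q = count c := funext hQ
  have hdvd : ∀ i, a i ∣ M := fun i => hM ▸ Finset.dvd_lcm (Finset.mem_univ i)
  have hM0 : 0 < M := by
    refine Nat.pos_of_ne_zero fun h => ?_
    rw [hM, Finset.lcm_eq_zero_iff] at h
    obtain ⟨i, -, hi⟩ := h
    exact (ha i).ne' hi
  have hrM : r < M := hr ▸ Nat.mod_lt _ hM0
  have hbr : M * (b / M) + r = b := by rw [hr]; exact Nat.div_add_mod b M
  set q := b / M with hq
  set N : Fin n → ℕ := fun i => M * c i with hN
  have hN0 : ∀ i, 0 < N i := fun i => Nat.mul_pos hM0 (hc i)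
  have hmk : ∀ k : ℕ, m k = PowerSeries.coeff (r + k * M) (quot a N) := by
    intro k
    rw [hm, coeff_quot a N ha]
    refine Finset.sum_congr rfl fun S _ => ?_
    simp [hN, Finset.mul_sum]
  have hvan : ∀ k : ℕ, sbar < k → m k = 0 := by
    intro k hk
    rw [hmk]
    refine coeff_quot_eq_zero a N ha hN0 (fun i => (hdvd i).mul_right _) _ ?_
    rw [hsbar, Int.floor_lt] at hk
    have hMq : (0 : ℚ) < M := by exact_mod_cast hM0
    have h1 : (∑ i, (c i : ℚ)) < k + ((∑ i, (a i : ℚ)) + r) / M := by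
      push_cast at hk
      linarith
    have h2 : (M : ℚ) * ∑ i, (c i : ℚ) < M * k + ((∑ i, (a i : ℚ)) + r) := by
      calc (M : ℚ) * ∑ i, (c i : ℚ) < M * (k + ((∑ i, (a i : ℚ)) + r) / M) :=
            mul_lt_mul_of_pos_left h1 hMq
        _ = _ := by field_simp
    have h3 : M * ∑ i, c i < M * k + (∑ i, a i + r) := by exact_mod_cast h2
    rw [hN, ← Finset.mul_sum]
    linarith
  have hfac : gen a = quot a N * gen N := by
    rw [quot, mul_right_comm, prod_one_sub_mul_gen N hN0, one_mul]
  refine ⟨?_, ?_⟩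
  · rw [← coeff_gen a ha b, hfac, PowerSeries.coeff_mul]
    symm
    -- the terms with `k > q` vanish, which makes the truncated subtraction `q - k` harmless
    have hle : ∀ k ∈ Finset.Icc (0 : ℤ) sbar, m k * (count c ((q : ℤ) - k) : ℤ) ≠ 0 →
        k.toNat ≤ q ∧ ((k.toNat : ℕ) : ℤ) = k := by
      intro k hk h
      have hk0 := (Finset.mem_Icc.mp hk).1
      have : ¬ (q : ℤ) - k < 0 := fun hneg => h (by rw [count_of_neg c hneg]; simp)
      omega
    have hterm : ∀ k : ℕ, k ≤ q → m k * (count c ((q : ℤ) - k) : ℤ) =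
        PowerSeries.coeff (r + k * M) (quot a N) * PowerSeries.coeff (M * (q - k)) (gen N) := by
      intro k hk
      rw [hmk, coeff_gen N hN0, ← count_mul M hM0 c]
      push_cast [hk]
      rfl
    refine Finset.sum_bij_ne_zero (fun k _ _ => (r + k.toNat * M, M * (q - k.toNat))) ?_ ?_ ?_ ?_
    · intro k hk h
      obtain ⟨hkq, -⟩ := hle k hk h
      obtain ⟨j, hj⟩ := Nat.exists_eq_add_of_le hkq
      rw [Finset.HasAntidiagonal.mem_antidiagonal, ← hbr, hj]
      simp only [Nat.add_sub_cancel_left]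
      ring
    · intro k hk h k' hk' h' heq
      have h1 := (hle k hk h).2
      have h2 := (hle k' hk' h').2
      have h3 : k.toNat * M = k'.toNat * M := by
        have := (Prod.mk.inj heq).1
        omega
      have := Nat.eq_of_mul_eq_mul_right hM0 h3
      omega
    · rintro ⟨u, v⟩ huv h
      rw [Finset.HasAntidiagonal.mem_antidiagonal] at huv
      simp only at huv h
      have hv : count N v ≠ 0 := fun h0 => h (by rw [coeff_gen N hN0, h0]; simp)
      obtain ⟨j, rfl⟩ := dvd_of_count_ne_zero M c v hv
      have hjq : j ≤ q := by
        rw [hq, Nat.le_div_iff_mul_le hM0]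
        linarith [mul_comm M j]
      obtain ⟨k, hk⟩ := Nat.exists_eq_add_of_le' hjq
      have hu : u = r + k * M := by
        rw [← hbr, hk] at huv
        linarith [mul_add M k j, mul_comm M k]
      have hj : j = q - k := by omega
      have hkq : k ≤ q := by omega
      rw [hj, hu] at h
      rw [← hterm k hkq] at h
      have hks : (k : ℤ) ≤ sbar := by
        by_contra hlt
        exact h (by rw [hvan k (not_le.mp hlt), zero_mul])
      exact ⟨(k : ℤ), Finset.mem_Icc.mpr ⟨by positivity, hks⟩, h, by simp [hj, hu]⟩
    · intro k hk h
      obtain ⟨hkq, hcast⟩ := hle k hk h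
      have := hterm k.toNat hkq
      rwa [hcast] at this
  · rw [hm, Finset.sum_eq_single ∅]
    · simp
    -- a nonempty `S` gives a negative argument, because `r < M ≤ M * ∑ i ∈ S, c i`
    · intro S _ hS
      obtain ⟨i, hi⟩ := Finset.nonempty_iff_ne_empty.mpr hS
      have h1 : (c i : ℤ) ≤ ∑ i ∈ S, (c i : ℤ) :=
        Finset.single_le_sum (f := fun i => (c i : ℤ)) (fun _ _ => by positivity) hi
      have h2 : (1 : ℤ) ≤ ∑ i ∈ S, (c i : ℤ) := by have := hc i; omega
      have h3 : (M : ℤ) * 1 ≤ M * ∑ i ∈ S, (c i : ℤ) :=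
        mul_le_mul_of_nonneg_left h2 (by positivity)
      rw [count_of_neg a (by have : (r : ℤ) < M := by exact_mod_cast hrM
                             linarith)]
      simp
    · simp
end

section
/- Let n ≥ 2, let a₁,...,aₙ be positive integers, and let b be a nonnegative integer. Let M = lcm(a₁,...,aₙ), let r be the remainder of b modulo M, set s = ⌊n − (∑_{i=1}^n aᵢ + r)/M⌋, and for each integer k ≥ 0 set l_k = ∑_{j=0}^{k} (−1)^j · C(n,j) · P(r + (k−j)M), where C(n,j) is the binomial coefficient. Let N(d) denote the number of tuples (x₁,...,xₙ) of nonnegative integers with ∑_{i=1}^n xᵢ = d (so N(d) = C(d+n−1, n−1) for d ≥ 0, and N(d) = 0 for d < 0). Then P(b) = ∑_{k=0}^{s} l_k · N(⌊b/M⌋ − k), where the sum is empty if s < 0. -/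
/-!
Write `F = ∑ P(c) X ^ c`, a formal power series over `ℤ`. Counting solutions coordinate by
coordinate gives `F * ∏ i, (1 - X ^ a i) = 1`. As each `a i` divides `M`, the product
`Q = ∏ i, (1 + X ^ a i + ⋯ + X ^ (M - a i))` is a polynomial of degree at most
`n * M - ∑ i, a i` satisfying `Q * ∏ i, (1 - X ^ a i) = (1 - X ^ M) ^ n`. Hence:

* `Q = F * (1 - X ^ M) ^ n`, so by the binomial theorem the coefficient of `X ^ (r + k * M)` in `Q`
  is `l k`, and by the degree bound it vanishes once `k > s`;
* `F = Q * H`, where `H = 1 / (1 - X ^ M) ^ n` is the series for the equation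
  `∑ i, M * x i = c`, whose coefficient at `X ^ (m * M)` is `N m` and whose other coefficients
  vanish.

Comparing the coefficients of `X ^ b` in `F = Q * H` gives the formula.
-/

namespace Denumerant

open PowerSeries

/-! ### The generating series of the solution counts -/

/-- The number of `x : Fin n → ℕ` with `∑ i, a i * x i = c`. -/
noncomputable def cnt {n : ℕ} (a : Fin n → ℕ) (c : ℕ) : ℕ :=
  Nat.card {x : Fin n → ℕ // ∑ i, a i * x i = c}

/-- The generating series `∑ c, cnt a c * X ^ c`. -/
noncomputable def gen {n : ℕ} (a : Fin n → ℕ) : PowerSeries ℤ :=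
  PowerSeries.mk fun c => (cnt a c : ℤ)

/-- The series `1 + X ^ d + X ^ (2 * d) + ⋯`. -/
noncomputable def geo (d : ℕ) : PowerSeries ℤ :=
  PowerSeries.mk fun c => if d ∣ c then 1 else 0

lemma geo_mul (d : ℕ) (hd : 0 < d) : geo d * (1 - X ^ d) = 1 := by
  ext c
  rw [mul_sub, mul_one, map_sub, coeff_mul_X_pow', coeff_one]
  simp only [geo, coeff_mk]
  by_cases h : d ≤ c
  · have : d ∣ c - d ↔ d ∣ c := by
      rw [Nat.dvd_sub_iff_left h dvd_rfl]
    have h0 : c ≠ 0 := by omega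
    simp [h, this, h0]
  · rcases Nat.eq_zero_or_pos c with rfl | hc
    · simp [hd.ne']
    · have : ¬ d ∣ c := fun h' => h (Nat.le_of_dvd hc h')
      simp [h, this, hc.ne']

lemma gen_eq_prod {n : ℕ} (a : Fin n → ℕ) (ha : ∀ i, 0 < a i) :
    gen a = ∏ i, geo (a i) := by
  ext c
  rw [coeff_prod]
  simp only [gen, geo, coeff_mk, Finset.prod_boole, Finset.mem_univ, true_imp_iff,
    Finset.sum_boole]
  congr 1
  rw [cnt, ← Fintype.card_coe, ← Nat.card_eq_fintype_card]
  refine Nat.card_congr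
    { toFun := fun x => ⟨Finsupp.equivFunOnFinite.symm fun i => a i * x.1 i, ?_⟩
      invFun := fun l => ⟨fun i => l.1 i / a i, ?_⟩
      left_inv := ?_
      right_inv := ?_ }
  · rw [Finset.mem_filter, Finset.mem_finsuppAntidiag]
    exact ⟨⟨by simpa using x.2, Finset.subset_univ _⟩, fun i => by simp⟩
  · have hl := l.2
    rw [Finset.mem_filter, Finset.mem_finsuppAntidiag] at hl
    refine Eq.trans ?_ hl.1.1
    exact Finset.sum_congr rfl fun i _ => Nat.mul_div_cancel' (hl.2 i)
  · intro x
    ext i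
    simp [Nat.mul_div_cancel_left _ (ha i)]
  · intro l
    have hl := l.2
    rw [Finset.mem_filter] at hl
    ext i
    simp [Nat.mul_div_cancel' (hl.2 i)]

lemma gen_mul {n : ℕ} (a : Fin n → ℕ) (ha : ∀ i, 0 < a i) :
    gen a * ∏ i, (1 - X ^ a i) = 1 := by
  rw [gen_eq_prod a ha, ← Finset.prod_mul_distrib]
  exact Finset.prod_eq_one fun i _ => geo_mul _ (ha i)

/-! ### The quotient `(1 - X ^ M) ^ n / ∏ i, (1 - X ^ a i)` -/

/-- The polynomial `∏ i, (1 + X ^ a i + ⋯ + X ^ (M - a i))`. -/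
noncomputable def quo {n : ℕ} (a : Fin n → ℕ) (M : ℕ) : Polynomial ℤ :=
  ∏ i, ∑ j ∈ Finset.range (M / a i), (Polynomial.X ^ a i) ^ j

lemma quo_mul {n : ℕ} (a : Fin n → ℕ) (M : ℕ) (hM : ∀ i, a i ∣ M) :
    (quo a M : PowerSeries ℤ) * ∏ i, (1 - X ^ a i) = (1 - X ^ M) ^ n := by
  have h : quo a M * ∏ i, (1 - Polynomial.X ^ a i) = (1 - Polynomial.X ^ M) ^ n := by
    rw [quo, ← Finset.prod_mul_distrib]
    rw [Finset.prod_congr rfl (g := fun _ => (1 - Polynomial.X ^ M : Polynomial ℤ))]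
    · simp
    · intro i _
      rw [geom_sum_mul_neg, ← pow_mul, Nat.mul_div_cancel' (hM i)]
  have h2 := congrArg (Polynomial.coeToPowerSeries.ringHom (R := ℤ)) h
  rw [map_mul, map_prod] at h2
  simpa using h2

lemma quo_natDegree {n : ℕ} (a : Fin n → ℕ) (M : ℕ) (hM0 : 0 < M) (hM : ∀ i, a i ∣ M) :
    (quo a M).natDegree + ∑ i, a i ≤ n * M := by
  have h1 : (quo a M).natDegree ≤ ∑ i, (M - a i) := by
    refine (Polynomial.natDegree_prod_le _ _).trans (Finset.sum_le_sum fun i _ => ?_)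
    refine Polynomial.natDegree_sum_le_of_forall_le _ _ fun j hj => ?_
    rw [← pow_mul, Polynomial.natDegree_X_pow]
    have hj := Finset.mem_range.1 hj
    have h3 : a i * (j + 1) ≤ M := by
      calc a i * (j + 1) ≤ a i * (M / a i) := Nat.mul_le_mul_left _ hj
        _ = M := Nat.mul_div_cancel' (hM i)
    rw [mul_add] at h3
    omega
  have h2 : ∑ i, (M - a i) + ∑ i, a i = n * M := by
    rw [← Finset.sum_add_distrib, Finset.sum_congr rfl (g := fun _ => M)]
    · simp
    · intro i _
      exact Nat.sub_add_cancel (Nat.le_of_dvd hM0 (hM i))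
  omega

lemma gen_mul_pow {n : ℕ} (a : Fin n → ℕ) (ha : ∀ i, 0 < a i) (M : ℕ) (hM : ∀ i, a i ∣ M) :
    gen a * (1 - X ^ M) ^ n = (quo a M : PowerSeries ℤ) := by
  rw [← quo_mul a M hM, mul_left_comm, gen_mul a ha, mul_one]

lemma gen_eq_quo_mul {n : ℕ} (a : Fin n → ℕ) (ha : ∀ i, 0 < a i) (M : ℕ) (hM0 : 0 < M)
    (hM : ∀ i, a i ∣ M) :
    gen a = (quo a M : PowerSeries ℤ) * gen (fun _ : Fin n => M) := by
  have h := gen_mul (fun _ : Fin n => M) (fun _ => hM0)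
  simp only [Finset.prod_const, Finset.card_univ, Fintype.card_fin] at h
  rw [← gen_mul_pow a ha M hM, mul_assoc, mul_comm ((1 - X ^ M) ^ n), h, mul_one]

lemma quo_coeff {n : ℕ} (a : Fin n → ℕ) (ha : ∀ i, 0 < a i) (M : ℕ) (hM : ∀ i, a i ∣ M)
    (c : ℕ) :
    (quo a M).coeff c = ∑ j ∈ Finset.range (n + 1),
      if M * j ≤ c then (-1) ^ j * (n.choose j) * (cnt a (c - M * j) : ℤ) else 0 := by
  rw [← Polynomial.coeff_coe, ← gen_mul_pow a ha M hM, sub_eq_neg_add, add_pow, Finset.mul_sum,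
    map_sum]
  refine Finset.sum_congr rfl fun j _ => ?_
  have : gen a * ((-X ^ M) ^ j * 1 ^ (n - j) * (n.choose j : PowerSeries ℤ)) =
      C ((-1) ^ j * (n.choose j : ℤ)) * (gen a * X ^ (M * j)) := by
    rw [neg_pow, ← pow_mul]
    simp
    ring
  rw [this, coeff_C_mul, coeff_mul_X_pow']
  split_ifs <;> simp [gen]

/-! ### Comparing coefficients -/

lemma cnt_const_mul {n : ℕ} (M : ℕ) (hM0 : 0 < M) (m : ℕ) :
    cnt (fun _ : Fin n => M) (M * m) = cnt (fun _ : Fin n => 1) m := by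
  unfold cnt
  simp only [← Finset.mul_sum, one_mul]
  simp only [Nat.mul_right_inj hM0.ne']

lemma cnt_const_not_dvd {n : ℕ} (M c : ℕ) (h : ¬ M ∣ c) :
    cnt (fun _ : Fin n => M) c = 0 := by
  unfold cnt
  have : IsEmpty {x : Fin n → ℕ // ∑ i, M * x i = c} :=
    ⟨fun x => h (x.2 ▸ by rw [← Finset.mul_sum]; exact dvd_mul_right _ _)⟩
  exact Nat.card_of_isEmpty

/-- The coefficient of `X ^ b` in `gen_eq_quo_mul`: only the exponents `b % M + k * M` of the
quotient contribute, since the other factor is a series in `X ^ M`. -/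
lemma cnt_eq {n : ℕ} (a : Fin n → ℕ) (ha : ∀ i, 0 < a i) (M : ℕ) (hM0 : 0 < M)
    (hM : ∀ i, a i ∣ M) (b : ℕ) :
    (cnt a b : ℤ) = ∑ k ∈ Finset.range (b / M + 1),
      (quo a M).coeff (b % M + k * M) * (cnt (fun _ : Fin n => 1) (b / M - k) : ℤ) := by
  have h := congrArg (coeff b) (gen_eq_quo_mul a ha M hM0 hM)
  rw [coeff_mul] at h
  simp only [gen, coeff_mk, Polynomial.coeff_coe] at h
  rw [h]
  symm
  have hb := Nat.mod_add_div b M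
  refine Finset.sum_of_injOn (fun k => (b % M + k * M, M * (b / M - k))) ?_ ?_ ?_ ?_
  · intro k _ k' _ hkk
    simp only [Prod.mk.injEq] at hkk
    exact Nat.eq_of_mul_eq_mul_right hM0 (Nat.add_left_cancel hkk.1)
  · intro k hk
    have hk : k ≤ b / M := by simpa [Nat.lt_succ_iff] using hk
    obtain ⟨m, hm⟩ := Nat.exists_eq_add_of_le hk
    refine Finset.mem_coe.2 (Finset.HasAntidiagonal.mem_antidiagonal.2 ?_)
    simp only
    rw [hm, Nat.add_sub_cancel_left]
    rw [hm] at hb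
    linarith
  · rintro ⟨p, q⟩ hpq hn
    have hpq : p + q = b := by simpa using hpq
    by_cases hd : M ∣ q
    · exfalso
      obtain ⟨m, rfl⟩ := hd
      have hm : m ≤ b / M := by
        rw [Nat.le_div_iff_mul_le hM0]; linarith
      refine hn ⟨b / M - m, by simp, ?_⟩
      obtain ⟨t, ht⟩ := Nat.exists_eq_add_of_le hm
      simp only [Prod.mk.injEq]
      have e1 : b / M - m = t := by omega
      rw [e1]
      refine ⟨?_, by congr 1; rw [ht]; exact Nat.add_sub_cancel _ _⟩
      rw [ht] at hb
      linarith
    · simp [cnt_const_not_dvd M q hd]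
  · intro k _
    simp only [cnt_const_mul M hM0]

end Denumerant

open Denumerant in
theorem stmt_3 (n : ℕ) (hn : 2 ≤ n) (a : Fin n → ℕ)
    (ha : ∀ i, 0 < a i) (b : ℕ)
    (M : ℕ) (hM : M = Finset.univ.lcm a)
    (r : ℕ) (hr : r = b % M)
    (P : ℤ → ℕ)
    (hP : ∀ e : ℤ, P e = Nat.card {x : Fin n → ℕ // ∑ i, (a i : ℤ) * x i = e})
    (N : ℤ → ℕ)
    (hN : ∀ e : ℤ, N e = Nat.card {x : Fin n → ℕ // ∑ i, (x i : ℤ) = e})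
    (s : ℤ)
    (hs : s = ⌊(n : ℚ) - ((∑ i, (a i : ℚ)) + r) / M⌋)
    (l : ℤ → ℤ)
    (hl : ∀ k : ℤ, l k =
      ∑ j ∈ Finset.Icc (0 : ℤ) k,
        (-1 : ℤ) ^ j.toNat * (n.choose j.toNat) * (P ((r : ℤ) + (k - j) * M) : ℤ)) :
    (P (b : ℤ) : ℤ) =
      ∑ k ∈ Finset.Icc (0 : ℤ) s, l k * (N (((b / M : ℕ) : ℤ) - k) : ℤ) := by
  have hdvd : ∀ i, a i ∣ M := fun i => hM ▸ Finset.dvd_lcm (Finset.mem_univ i)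
  have hM0 : 0 < M := by
    rw [hM, Nat.pos_iff_ne_zero, Ne, Finset.lcm_eq_zero_iff]
    simpa using fun i => (ha i).ne'
  have hrM : r < M := hr ▸ Nat.mod_lt _ hM0
  have hPn : ∀ c : ℕ, P c = cnt a c := by
    intro c
    rw [hP, cnt]
    norm_cast
  have hNn : ∀ c : ℕ, N c = cnt (fun _ : Fin n => 1) c := by
    intro c
    rw [hN, cnt]
    simp only [one_mul]
    norm_cast
  have hNneg : ∀ e : ℤ, e < 0 → N e = 0 := by
    intro e he
    rw [hN]
    have : IsEmpty {x : Fin n → ℕ // ∑ i, (x i : ℤ) = e} :=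
      ⟨fun x => absurd x.2 (by have : 0 ≤ ∑ i, (x.1 i : ℤ) := by positivity
                               omega)⟩
    exact Nat.card_of_isEmpty
  have hlk : ∀ k : ℕ, l k = (quo a M).coeff (r + k * M) := by
    intro k
    rw [hl, quo_coeff a ha M hdvd]
    have hIcc : Finset.Icc (0 : ℤ) k = (Finset.range (k + 1)).map Nat.castEmbedding := by
      ext z
      simp only [Finset.mem_Icc, Finset.mem_map, Finset.mem_range, Nat.castEmbedding_apply]
      constructor
      · rintro ⟨h1, h2⟩
        exact ⟨z.toNat, by omega, by omega⟩
      · rintro ⟨m, h1, rfl⟩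
        omega
    rw [hIcc, Finset.sum_map]
    simp only [Nat.castEmbedding_apply, Int.toNat_natCast]
    have hiff : ∀ j, M * j ≤ r + k * M ↔ j ≤ k := by
      intro j
      constructor
      · intro h
        by_contra! hjk
        have : M * (k + 1) ≤ M * j := Nat.mul_le_mul_left _ hjk
        nlinarith
      · intro h
        have : M * j ≤ M * k := Nat.mul_le_mul_left _ h
        nlinarith
    simp only [hiff]
    -- Both sums extend to `j < n + k + 1`: the extra terms have `choose n j = 0` or `k < j`.
    trans ∑ j ∈ Finset.range (n + k + 1),
      if j ≤ k then (-1) ^ j * (n.choose j) * (cnt a (r + k * M - M * j) : ℤ) else 0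
    · symm
      rw [← Finset.sum_subset (s₁ := Finset.range (k + 1))]
      · refine Finset.sum_congr rfl fun j hj => ?_
        have hj : j ≤ k := by simpa [Nat.lt_succ_iff] using hj
        rw [if_pos hj, ← hPn]
        congr 3
        rw [Nat.cast_sub ((hiff j).2 hj)]
        push_cast
        ring
      · intro j; simp; omega
      · intro j _ hj
        rw [if_neg]
        simp at hj; omega
    · symm
      apply Finset.sum_subset
      · intro j; simp; omega
      · intro j _ hj
        have hj : n < j := by simp at hj; omega
        simp [Nat.choose_eq_zero_of_lt hj]
  have hl0 : ∀ k : ℕ, s < k → l k = 0 := by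
    intro k hk
    rw [hlk]
    apply Polynomial.coeff_eq_zero_of_natDegree_lt
    have hd := quo_natDegree a M hM0 hdvd
    rw [hs, Int.floor_lt] at hk
    have hMq : (0 : ℚ) < M := by exact_mod_cast hM0
    rw [sub_lt_iff_lt_add, ← sub_lt_iff_lt_add', lt_div_iff₀ hMq] at hk
    have : n * M < ∑ i, a i + r + k * M := by
      have h' : (n * M : ℚ) < ∑ i, (a i : ℚ) + r + k * M := by
        push_cast at hk
        linarith
      exact_mod_cast h'
    omega
  rw [hPn, cnt_eq a ha M hM0 hdvd b]
  -- Both sums extend to `k < ⌊b / M⌋ + 1 + s.toNat`, as `l k = 0` for `k > s` and `N` vanishes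
  -- on negative integers.
  trans ∑ k ∈ Finset.range (b / M + 1 + s.toNat), l k * (N (((b / M : ℕ) : ℤ) - (k : ℤ)) : ℤ)
  · rw [← Finset.sum_subset (s₁ := Finset.range (b / M + 1))
      (s₂ := Finset.range (b / M + 1 + s.toNat))]
    · refine Finset.sum_congr rfl fun k hk => ?_
      have hk : k ≤ b / M := by simpa [Nat.lt_succ_iff] using hk
      rw [hlk, ← hNn, hr, Nat.cast_sub hk]
    · intro k
      simp only [Finset.mem_range]
      omega
    · intro k _ hk
      simp only [Finset.mem_range] at hk
      rw [hNneg _ (by omega)]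
      simp
  · symm
    refine Finset.sum_of_injOn Int.toNat ?_ ?_ ?_ ?_
    · intro k hk k' hk' h
      simp only [Finset.coe_Icc, Set.mem_Icc] at hk hk'
      omega
    · intro k hk
      simp only [Finset.coe_Icc, Set.mem_Icc] at hk
      simp only [Finset.coe_range, Set.mem_Iio]
      generalize b / M = t
      omega
    · intro k _ hk
      rw [hl0 k, zero_mul]
      by_contra! hks
      exact hk ⟨k, by simpa using hks, by simp⟩
    · intro k hk
      rw [Int.toNat_of_nonneg (Finset.mem_Icc.1 hk).1]
end

section
/- Let n ≥ 2, let a₁,...,aₙ be positive integers, and let b be a nonnegative integer. Let M = lcm(a₁,...,aₙ), let r be the remainder of b modulo M, set s = ⌊n − (∑_{i=1}^n aᵢ + r)/M⌋, and for each integer k ≥ 0 set l_k = ∑_{j=0}^{k} (−1)^j · C(n,j) · P(r + (k−j)M). Then P(b) = ∑_{k=0}^{s} l_k · C̄(⌊b/M⌋ + n − 1 − k, n − 1), where the sum is empty if s < 0 and C̄(a, m) denotes the binomial coefficient C(a, m) when a ≥ m and 0 otherwise (including when a < 0). -/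
/-!
Write `p c` for the number of solutions of `∑ aᵢ xᵢ = c` in nonnegative integers. Its generating
series is `F = ∏ᵢ 1 / (1 - X ^ aᵢ)` (`coeff_denumSeries`, `dvdSeries_mul`).

*The inversion.* Fix the residue `r` and let `φ = ∑ₘ p (r + m M) Xᵐ`. Expanding `(1 - X) ^ n` by the
binomial theorem shows that `l k` is the `k`-th coefficient of `(1 - X) ^ n * φ`. Multiplying back by
`1 / (1 - X) ^ n`, whose coefficients are `C(m + n - 1, n - 1)`, expresses `p (r + q M)` as
`∑_{k ≤ q} l k * C(q - k + n - 1, n - 1)`, which is the asserted formula with `k` running up to `q`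
rather than up to `s`.

*The truncation.* Since `aᵢ ∣ M`, the series `(1 - X ^ M) ^ n * F` is the polynomial
`∏ᵢ (1 - X ^ M) / (1 - X ^ aᵢ)`, of degree at most `n M - ∑ aᵢ`. Again by the binomial theorem
(`coeff_one_sub_X_pow_mul`), `l k` is its coefficient at `r + k M`, so `l k = 0` once
`r + k M > n M - ∑ aᵢ`, that is, once `k > s`. The terms with `k > q` vanish because `C̄` does.
-/

/-- `C̄(a, m)` is the binomial coefficient `C(a, m)` when `a ≥ m` and `0` otherwise
(including when `a < 0`). -/
def Cbar (a : ℤ) (m : ℕ) : ℕ := if (m : ℤ) ≤ a then a.toNat.choose m else 0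

open Finset PowerSeries in
/-- The coefficients of `(1 - X ^ M) ^ n * φ` at exponents congruent to `r` modulo `M`. -/
lemma coeff_one_sub_X_pow_mul (n M r k : ℕ) (hr : r < M) (φ : PowerSeries ℤ) :
    coeff (r + k * M) ((1 - X ^ M) ^ n * φ) =
      ∑ j ∈ range (k + 1), (-1 : ℤ) ^ j * (n.choose j) * coeff (r + (k - j) * M) φ := by
  have hM : 0 < M := by omega
  have hexp : ((1 - X ^ M) ^ n : PowerSeries ℤ) =
      ∑ j ∈ range (n + 1), C ((-1 : ℤ) ^ j * (n.choose j)) * X ^ (M * j) := by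
    rw [sub_eq_neg_add, add_pow]
    refine sum_congr rfl fun j _ => ?_
    rw [neg_pow, pow_mul]
    simp
    ring
  have hterm : ∀ j, coeff (r + k * M) (C ((-1 : ℤ) ^ j * (n.choose j)) * X ^ (M * j) * φ) =
      if j < k + 1 then (-1 : ℤ) ^ j * (n.choose j) * coeff (r + (k - j) * M) φ else 0 := by
    intro j
    rw [mul_assoc, coeff_C_mul, coeff_X_pow_mul']
    by_cases hj : j < k + 1
    · obtain ⟨i, rfl⟩ := Nat.exists_eq_add_of_le (Nat.lt_succ_iff.mp hj)
      have h1 : M * j ≤ r + (j + i) * M := by nlinarith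
      have h2 : r + (j + i) * M - M * j = r + (j + i - j) * M := by
        rw [Nat.add_sub_cancel_left, Nat.sub_eq_iff_eq_add h1]
        ring
      rw [if_pos hj, if_pos h1, h2]
    · have h1 : ¬ M * j ≤ r + k * M := by
        have : (k + 1) * M ≤ j * M := Nat.mul_le_mul_right _ (by omega)
        nlinarith
      rw [if_neg hj, if_neg h1, mul_zero]
  rw [hexp, sum_mul, map_sum, sum_congr rfl fun j _ => hterm j]
  -- Both ranges can be enlarged: the binomial coefficient vanishes for `j > n`.
  have hL := sum_subset (range_mono (show n + 1 ≤ n + k + 1 by omega))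
    (f := fun j => if j < k + 1 then
      (-1 : ℤ) ^ j * (n.choose j) * coeff (r + (k - j) * M) φ else 0) (by
      intro j _ hj
      have : n.choose j = 0 := Nat.choose_eq_zero_of_lt (by simpa using hj)
      simp [this])
  have hR := sum_subset (range_mono (show k + 1 ≤ n + k + 1 by omega))
    (f := fun j => if j < k + 1 then
      (-1 : ℤ) ^ j * (n.choose j) * coeff (r + (k - j) * M) φ else 0) (by
      intro j _ hj
      rw [if_neg (by simpa using hj)])
  rw [hL, ← hR]
  exact sum_congr rfl fun j hj => if_pos (mem_range.mp hj)

/-- The series `∑_{d ∣ c} X ^ c`, that is, `1 / (1 - X ^ d)`. -/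
noncomputable def dvdSeries (d : ℕ) : PowerSeries ℤ :=
  PowerSeries.mk fun c => if d ∣ c then 1 else 0

open PowerSeries in
lemma dvdSeries_mul (d : ℕ) (hd : 0 < d) : dvdSeries d * (1 - X ^ d) = 1 := by
  ext c
  rw [mul_sub, mul_one, map_sub, coeff_mul_X_pow', coeff_one, dvdSeries, coeff_mk, coeff_mk]
  by_cases h : d ≤ c
  · have : c ≠ 0 := by omega
    simp [h, this, Nat.dvd_sub_iff_left h dvd_rfl]
  · by_cases hc : c = 0
    · simp [hc, hd.ne']
    · have : ¬ d ∣ c := fun h' => h (Nat.le_of_dvd (by omega) h')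
      simp [h, hc, this]

open Finset PowerSeries in
/-- `∏ᵢ 1 / (1 - X ^ aᵢ)` is the generating series of the number of solutions of `∑ aᵢ xᵢ = c`. -/
lemma coeff_denumSeries {n : ℕ} (a : Fin n → ℕ) (ha : ∀ i, 0 < a i) (c : ℕ) :
    coeff c (∏ i, dvdSeries (a i)) =
      (Nat.card {x : Fin n → ℕ // ∑ i, (a i : ℤ) * x i = (c : ℤ)} : ℤ) := by
  have hprod : ∀ l : Fin n →₀ ℕ, ∏ i, coeff (l i) (dvdSeries (a i)) =
      if ∀ i, a i ∣ l i then (1 : ℤ) else 0 := by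
    intro l
    simp only [dvdSeries, coeff_mk]
    rw [prod_ite_zero]
    simp
  rw [coeff_prod, sum_congr rfl fun l _ => hprod l, sum_boole, Nat.cast_inj,
    ← Nat.card_eq_finsetCard]
  -- A solution `x` corresponds to the composition of `c` into the parts `aᵢ xᵢ`.
  symm
  refine Nat.card_congr
    { toFun := fun x => ⟨Finsupp.equivFunOnFinite.symm fun i => a i * x.1 i, ?_⟩
      invFun := fun l => ⟨fun i => l.1 i / a i, ?_⟩
      left_inv := ?_
      right_inv := ?_ }
  · have := x.2
    simp only [mem_filter, mem_finsuppAntidiag, subset_univ, and_true]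
    refine ⟨?_, fun i => Dvd.intro _ rfl⟩
    simp only [Finsupp.equivFunOnFinite_symm_apply_apply]
    exact_mod_cast this
  · have := l.2
    simp only [mem_filter, mem_finsuppAntidiag, subset_univ, and_true] at this
    have hsum : ∑ i, a i * (l.1 i / a i) = c :=
      (sum_congr rfl fun i _ => Nat.mul_div_cancel' (this.2 i)).trans this.1
    exact_mod_cast hsum
  · intro x
    ext i
    simp [Nat.mul_div_cancel_left _ (ha i)]
  · intro l
    have := (mem_filter.mp l.2).2
    ext i
    simp [Nat.mul_div_cancel' (this i)]

open Polynomial in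
/-- `(1 - X ^ (d m)) / (1 - X ^ d)` as a polynomial. -/
noncomputable def geomPoly (d m : ℕ) : ℤ[X] := ∑ j ∈ Finset.range m, (X ^ d) ^ j

lemma natDegree_geomPoly_le (d m : ℕ) : (geomPoly d m).natDegree ≤ d * (m - 1) := by
  refine Polynomial.natDegree_sum_le_of_forall_le _ _ fun j hj => ?_
  rw [← pow_mul, Polynomial.natDegree_X_pow]
  exact Nat.mul_le_mul_left _ (by have := Finset.mem_range.mp hj; omega)

open PowerSeries in
lemma one_sub_X_pow_mul_dvdSeries (d m : ℕ) (hd : 0 < d) :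
    (1 - X ^ (d * m)) * dvdSeries d = (geomPoly d m : PowerSeries ℤ) := by
  have h : (1 - X ^ (d * m) : PowerSeries ℤ) =
      (geomPoly d m : PowerSeries ℤ) * (1 - X ^ d) := by
    have := congrArg (fun p : Polynomial ℤ => (p : PowerSeries ℤ))
      (geom_sum_mul_neg (Polynomial.X ^ d : Polynomial ℤ) m)
    simp only [Polynomial.coe_mul, Polynomial.coe_sub, Polynomial.coe_pow, Polynomial.coe_X,
      Polynomial.coe_one] at this
    rw [pow_mul, ← this]
    rfl
  rw [h, mul_assoc, mul_comm (1 - X ^ d), dvdSeries_mul d hd, mul_one]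

open Finset PowerSeries in
/-- `(1 - X ^ M) ^ n / ∏ᵢ (1 - X ^ aᵢ)` is a polynomial of degree at most `n M - ∑ aᵢ`. -/
lemma coeff_eq_zero_of_large {n : ℕ} (a : Fin n → ℕ) (ha : ∀ i, 0 < a i) (M : ℕ) (hM : 0 < M)
    (hdvd : ∀ i, a i ∣ M) (N : ℕ) (hN : n * M < N + ∑ i, a i) :
    coeff N ((1 - X ^ M) ^ n * ∏ i, dvdSeries (a i)) = 0 := by
  have hpoly : (1 - X ^ M) ^ n * ∏ i, dvdSeries (a i) =
      ((∏ i, geomPoly (a i) (M / a i) : Polynomial ℤ) : PowerSeries ℤ) := by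
    have h1 : ((1 - X ^ M) ^ n : PowerSeries ℤ) = ∏ _i : Fin n, (1 - X ^ M) := by simp
    rw [h1, ← prod_mul_distrib, ← Polynomial.coeToPowerSeries.ringHom_apply, map_prod]
    refine prod_congr rfl fun i _ => ?_
    rw [Polynomial.coeToPowerSeries.ringHom_apply, ← one_sub_X_pow_mul_dvdSeries _ _ (ha i),
      Nat.mul_div_cancel' (hdvd i)]
  rw [hpoly, Polynomial.coeff_coe]
  apply Polynomial.coeff_eq_zero_of_natDegree_lt
  have hdeg : (∏ i, geomPoly (a i) (M / a i)).natDegree ≤ ∑ i, a i * (M / a i - 1) :=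
    (Polynomial.natDegree_prod_le _ _).trans (sum_le_sum fun i _ => natDegree_geomPoly_le _ _)
  have hsum : ∑ i, a i * (M / a i - 1) + ∑ i, a i = n * M := by
    rw [← sum_add_distrib, sum_congr rfl (g := fun _ => M)]
    · simp
    · intro i _
      have : 0 < M / a i := Nat.div_pos (Nat.le_of_dvd hM (hdvd i)) (ha i)
      rw [← Nat.mul_succ, Nat.succ_eq_add_one, Nat.sub_add_cancel this,
        Nat.mul_div_cancel' (hdvd i)]
  omega

/-- Theorem 3.1: with `M = lcm(a₁,…,aₙ)`, `r = b mod M`,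
`s = ⌊n − (∑aᵢ + r)/M⌋` and `l_k = ∑_{j=0}^{k} (−1)^j C(n,j) P(r + (k−j)M)`, we have
`P(b) = ∑_{k=0}^{s} l_k C̄(⌊b/M⌋ + n − 1 − k, n − 1)` (empty sum if `s < 0`). -/
theorem stmt_4 (n : ℕ) (hn : 2 ≤ n) (a : Fin n → ℕ)
    (ha : ∀ i, 0 < a i) (b : ℕ)
    (M : ℕ) (hM : M = Finset.univ.lcm a)
    (r : ℕ) (hr : r = b % M)
    (P : ℤ → ℕ)
    (hP : ∀ e : ℤ, P e = Nat.card {x : Fin n → ℕ // ∑ i, (a i : ℤ) * x i = e})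
    (s : ℤ)
    (hs : s = ⌊(n : ℚ) - ((∑ i, (a i : ℚ)) + r) / M⌋)
    (l : ℤ → ℤ)
    (hl : ∀ k : ℤ, l k =
      ∑ j ∈ Finset.Icc (0 : ℤ) k,
        (-1 : ℤ) ^ j.toNat * (n.choose j.toNat) * (P ((r : ℤ) + (k - j) * M) : ℤ)) :
    (P (b : ℤ) : ℤ) =
      ∑ k ∈ Finset.Icc (0 : ℤ) s,
        l k * (Cbar (((b / M : ℕ) : ℤ) + n - 1 - k) (n - 1) : ℤ) := by
  have hdvd : ∀ i, a i ∣ M := fun i => hM ▸ Finset.dvd_lcm (Finset.mem_univ i)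
  have hMpos : 0 < M := by
    rw [Nat.pos_iff_ne_zero, hM, Ne, Finset.lcm_eq_zero_iff]
    rintro ⟨i, -, hi⟩
    exact (ha i).ne' hi
  have hrM : r < M := hr ▸ Nat.mod_lt _ hMpos
  -- Reindexing of integer intervals by natural numbers.
  have hIcc : ∀ (f : ℤ → ℤ) (k : ℕ),
      ∑ j ∈ Finset.Icc (0 : ℤ) k, f j = ∑ j ∈ Finset.range (k + 1), f j := by
    intro f k
    symm
    refine Finset.sum_bij (fun j _ => (j : ℤ)) ?_ ?_ ?_ ?_
    · intro j hj
      have := Finset.mem_range.mp hj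
      simp only [Finset.mem_Icc]
      omega
    · intro i _ j _ h
      exact_mod_cast h
    · intro j hj
      have := Finset.mem_Icc.mp hj
      exact ⟨j.toNat, Finset.mem_range.mpr (by omega), by omega⟩
    · intros
      rfl
  set F : PowerSeries ℤ := ∏ i, dvdSeries (a i) with hF
  have hPF : ∀ c : ℕ, (P (c : ℤ) : ℤ) = PowerSeries.coeff c F := fun c => by
    rw [hF, coeff_denumSeries a ha, hP]
  have hlk : ∀ k : ℕ, l k = ∑ j ∈ Finset.range (k + 1),
      (-1 : ℤ) ^ j * (n.choose j) * PowerSeries.coeff (r + (k - j) * M) F := by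
    intro k
    rw [hl, hIcc]
    refine Finset.sum_congr rfl fun j hj => ?_
    have hj' : j ≤ k := Nat.lt_succ_iff.mp (Finset.mem_range.mp hj)
    rw [← hPF, Int.toNat_natCast]
    push_cast [hj']
    rfl
  have hlzero : ∀ k : ℕ, s < k → l k = 0 := by
    intro k hk
    rw [hlk, ← coeff_one_sub_X_pow_mul n M r k hrM F]
    apply coeff_eq_zero_of_large a ha M hMpos hdvd
    rw [hs, Int.floor_lt, sub_lt_iff_lt_add, Int.cast_natCast] at hk
    have hMq : (0 : ℚ) < M := by exact_mod_cast hMpos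
    have h1 := mul_lt_mul_of_pos_right hk hMq
    rw [add_mul, div_mul_cancel₀ _ hMq.ne'] at h1
    have h2 : n * M < k * M + (∑ i, a i + r) := by exact_mod_cast h1
    omega
  -- The solution counts along the progression `r + m M`.
  let φ : PowerSeries ℤ := PowerSeries.mk fun m => PowerSeries.coeff (r + m * M) F
  have hlφ : ∀ k : ℕ, l k = PowerSeries.coeff k ((1 - PowerSeries.X) ^ n * φ) := by
    intro k
    have := coeff_one_sub_X_pow_mul n 1 0 k one_pos φ
    simp only [pow_one, mul_one, zero_add] at this
    rw [this, hlk]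
    simp [φ]
  have hφ : φ = (1 - PowerSeries.X) ^ n * φ *
      PowerSeries.mk fun m => (((n - 1 + m).choose (n - 1) : ℕ) : ℤ) := by
    have := PowerSeries.mk_add_choose_mul_one_sub_pow_eq_one ℤ (n - 1)
    rw [Nat.sub_add_cancel (by omega : 1 ≤ n)] at this
    rw [mul_right_comm, mul_comm ((1 - PowerSeries.X) ^ n), this, one_mul]
  set q := b / M with hq
  have hb : b = r + q * M := by rw [hr, hq, mul_comm, Nat.mod_add_div]
  have hmain : (P (b : ℤ) : ℤ) = ∑ k ∈ Finset.range (q + 1),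
      l k * (Cbar ((q : ℤ) + n - 1 - k) (n - 1) : ℤ) := by
    have h1 : (P (b : ℤ) : ℤ) = PowerSeries.coeff q φ := by
      rw [hPF, hb]
      simp [φ]
    rw [h1, hφ, PowerSeries.coeff_mul,
      Finset.Nat.sum_antidiagonal_eq_sum_range_succ_mk]
    refine Finset.sum_congr rfl fun k hk => ?_
    have hk' := Finset.mem_range.mp hk
    rw [← hlφ, PowerSeries.coeff_mk, Cbar, if_pos (by omega)]
    congr 3
    omega
  -- Both sums agree with the one over `0 ≤ k ≤ q + max s 0`.
  set T := q + s.toNat with hT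
  have hA : ∑ k ∈ Finset.range (q + 1), l k * (Cbar ((q : ℤ) + n - 1 - k) (n - 1) : ℤ) =
      ∑ k ∈ Finset.range (T + 1), l k * (Cbar ((q : ℤ) + n - 1 - k) (n - 1) : ℤ) := by
    apply Finset.sum_subset (Finset.range_mono (by omega))
    intro k _ hk
    have hqk : q + 1 ≤ k := by simpa using hk
    rw [Cbar, if_neg (by omega)]
    simp
  have hB : ∑ k ∈ Finset.Icc (0 : ℤ) s, l k * (Cbar ((q : ℤ) + n - 1 - k) (n - 1) : ℤ) =
      ∑ k ∈ Finset.Icc (0 : ℤ) T, l k * (Cbar ((q : ℤ) + n - 1 - k) (n - 1) : ℤ) := by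
    apply Finset.sum_subset
    · refine Finset.Icc_subset_Icc le_rfl ((Int.self_le_toNat s).trans ?_)
      exact_mod_cast (Nat.le_add_left _ _ : s.toNat ≤ q + s.toNat)
    · intro k hk hk'
      rw [Finset.mem_Icc] at hk hk'
      obtain ⟨m, rfl⟩ := Int.eq_ofNat_of_zero_le hk.1
      have hsm : s < m := not_le.mp fun h => hk' ⟨hk.1, h⟩
      rw [hlzero m hsm, zero_mul]
  rw [hmain, hA, hB, hIcc (fun k => l k * (Cbar ((q : ℤ) + n - 1 - k) (n - 1) : ℤ))]
end

section
/- Let n ≥ 2, let a₁,...,aₙ be positive integers, let M = lcm(a₁,...,aₙ), and fix r ∈ {0, 1, ..., M−1}. Then there exist rational numbers c₀, c₁, ..., c_{n−1} with c_{n−1} = P(r) such that for every nonnegative integer b with b ≡ r (mod M), P(b) = c₀·⌊b/M⌋^{n−1} + c₁·⌊b/M⌋^{n−2} + ⋯ + c_{n−2}·⌊b/M⌋ + c_{n−1}. That is, on each residue class modulo M, P(b) is a polynomial of degree at most n−1 in ⌊b/M⌋ whose constant term equals P(r). -/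
/-!
Write `x i = (M / a i) * y i + z i` with `z i < M / a i`. Since `a i * (M / a i) = M`, the equation
`∑ a i * x i = b` becomes `∑ a i * z i + M * ∑ y i = b`. There are finitely many remainder vectors
`z`, and `s = ∑ a i * z i` satisfies `s < n * M`. For `b = q * M + r` with `r < M`, a vector `z`
contributes only if `s % M = r`, and then the `y` are the solutions of `∑ y i = q - s / M`, of which
there are `(q + (n - 1 - s / M)).choose (n - 1)` by stars and bars (`card_fiber`). As
`s / M ≤ n - 1`, no truncation occurs in `n - 1 - s / M`, and the binomial coefficient vanishes
exactly when `q < s / M`, so the count is right for every `q ≥ 0`. It is a polynomial in `q` of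
degree at most `n - 1` (`exists_poly_choose`), hence so is the sum over `z`; its constant term is
its value at `q = 0`, that is `P r`.
-/

open Polynomial in
lemma exists_poly_choose (m k : ℕ) :
    ∃ p : ℚ[X], p.natDegree ≤ k ∧ ∀ q : ℕ, p.eval (q : ℚ) = ((q + m).choose k : ℚ) := by
  refine ⟨C ((k.factorial : ℚ)⁻¹) * (descPochhammer ℚ k).comp (X + C (m : ℚ)), ?_, fun q => ?_⟩
  · refine (natDegree_C_mul_le _ _).trans ?_
    rw [natDegree_comp, descPochhammer_natDegree, natDegree_X_add_C, mul_one]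
  · have h := descPochhammer_eval_eq_descFactorial ℚ (q + m) k
    have hk : (k.factorial : ℚ) ≠ 0 := by exact_mod_cast k.factorial_ne_zero
    push_cast at h
    rw [eval_mul, eval_C, eval_comp, eval_add, eval_X, eval_C, h,
      Nat.descFactorial_eq_factorial_mul_choose]
    push_cast
    field_simp

lemma finite_sum_eq (n k : ℕ) : Finite {y : Fin n → ℕ // ∑ i, y i = k} :=
  Finite.of_equiv (Finset.piAntidiag (Finset.univ : Finset (Fin n)) k)
    (Equiv.subtypeEquivRight fun y => by simp)

/-- Stars and bars. -/
lemma card_sum_eq (n k : ℕ) (hn : 0 < n) :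
    Nat.card {y : Fin n → ℕ // ∑ i, y i = k} = (k + (n - 1)).choose (n - 1) := by
  have e : Sym (Fin n) k ≃ {y : Fin n → ℕ // ∑ i, y i = k} := Sym.equivNatSumOfFintype (Fin n) k
  rw [← Nat.card_congr e, Nat.card_eq_fintype_card, Sym.card_sym_eq_choose, Fintype.card_fin,
    show n + k - 1 = k + (n - 1) by omega, Nat.choose_symm_add]

lemma finite_fiber (n M s b : ℕ) (hM : 0 < M) :
    Finite {y : Fin n → ℕ // s + M * ∑ i, y i = b} := by
  have := finite_sum_eq n ((b - s) / M)
  refine Finite.of_injective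
    (β := {y : Fin n → ℕ // ∑ i, y i = (b - s) / M}) (fun y => ⟨y.1, ?_⟩) ?_
  · have h : b - s = M * ∑ i, y.1 i := by have := y.2; omega
    rw [h, Nat.mul_div_cancel_left _ hM]
  · intro x y h
    simpa [Subtype.ext_iff] using h

lemma card_fiber (n M s q r : ℕ) (hn : 0 < n) (hr : r < M) (hs : s < n * M) :
    Nat.card {y : Fin n → ℕ // s + M * ∑ i, y i = q * M + r} =
      if s % M = r then (q + (n - 1 - s / M)).choose (n - 1) else 0 := by
  have hM : 0 < M := by omega
  have hj : s / M < n := Nat.div_lt_of_lt_mul (by rwa [mul_comm])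
  have hdm := Nat.div_add_mod s M
  -- comparing remainders and quotients modulo `M`
  have key : ∀ t : ℕ, s + M * t = q * M + r ↔ s % M = r ∧ s / M + t = q := by
    intro t
    constructor
    · intro h
      have h1 := congrArg (· % M) h
      have h2 := congrArg (· / M) h
      simp only [Nat.add_mul_mod_self_left, Nat.mul_add_mod_self_right, Nat.mod_eq_of_lt hr,
        Nat.add_mul_div_left _ _ hM] at h1 h2
      refine ⟨h1, h2.trans ?_⟩
      rw [mul_comm, Nat.mul_add_div hM, Nat.div_eq_of_lt hr, add_zero]
    · rintro ⟨h1, h2⟩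
      rw [← h2, ← h1]
      linarith [hdm, Nat.add_mul (s / M) t M, mul_comm M t, mul_comm M (s / M)]
  simp only [key]
  split_ifs with h
  · by_cases hq : s / M ≤ q
    · rw [Nat.card_congr (Equiv.subtypeEquivRight
        (q := fun y : Fin n → ℕ => ∑ i, y i = q - s / M) fun y => by omega),
        card_sum_eq n _ hn]
      congr 1
      omega
    · rw [Nat.choose_eq_zero_of_lt (by omega)]
      have : IsEmpty {y : Fin n → ℕ // s % M = r ∧ s / M + ∑ i, y i = q} :=
        ⟨fun y => by have := y.2.2; omega⟩
      exact Nat.card_of_isEmpty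
  · have : IsEmpty {y : Fin n → ℕ // s % M = r ∧ s / M + ∑ i, y i = q} :=
      ⟨fun y => h y.2.1⟩
    exact Nat.card_of_isEmpty

/-- Coordinatewise division with remainder, `x i = d i * y i + z i`, as an equivalence
`x ↔ (z, y)`. -/
def divModPi {n : ℕ} (d : Fin n → ℕ) [∀ i, NeZero (d i)] :
    (Fin n → ℕ) ≃ (∀ i, Fin (d i)) × (Fin n → ℕ) where
  toFun x := (fun i => (Nat.divModEquiv (d i) (x i)).2, fun i => (Nat.divModEquiv (d i) (x i)).1)
  invFun w i := (Nat.divModEquiv (d i)).symm (w.2 i, w.1 i)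
  left_inv x := by
    funext i
    exact (Nat.divModEquiv (d i)).symm_apply_apply (x i)
  right_inv w := by
    refine Prod.ext ?_ ?_ <;> funext i <;> simp only [Equiv.apply_symm_apply]

/-- The solutions are counted by summing over the remainder vectors `z`. -/
lemma card_solutions {n : ℕ} (a d : Fin n → ℕ) (M b : ℕ) (hM : 0 < M) (had : ∀ i, a i * d i = M) :
    Nat.card {x : Fin n → ℕ // ∑ i, a i * x i = b} =
      ∑ z : (∀ i, Fin (d i)),
        Nat.card {y : Fin n → ℕ // ∑ i, a i * (z i : ℕ) + M * ∑ i, y i = b} := by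
  have hd : ∀ i, NeZero (d i) := fun i => ⟨fun h => by simp [← had i, h] at hM⟩
  have := fun z : (∀ i, Fin (d i)) => finite_fiber n M (∑ i, a i * (z i : ℕ)) b hM
  rw [← Nat.card_sigma]
  refine Nat.card_congr (Equiv.trans ?_ (Equiv.subtypeProdEquivSigmaSubtype
    fun (z : ∀ i, Fin (d i)) (y : Fin n → ℕ) => ∑ i, a i * (z i : ℕ) + M * ∑ i, y i = b))
  refine (divModPi d).subtypeEquiv fun x => ?_
  have : ∑ i, a i * x i =
      ∑ i, a i * ((divModPi d x).1 i : ℕ) + M * ∑ i, (divModPi d x).2 i := by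
    rw [Finset.mul_sum, ← Finset.sum_add_distrib]
    refine Finset.sum_congr rfl fun i _ => ?_
    have h1 : ((divModPi d x).1 i : ℕ) = x i % d i := by simp [divModPi, Nat.divModEquiv]
    have h2 : (divModPi d x).2 i = x i / d i := by simp [divModPi, Nat.divModEquiv]
    rw [h1, h2, ← had i, mul_assoc, ← mul_add, Nat.mod_add_div]
  rw [this]

/-- formula (3.7)/(3.8): on each residue class `r` modulo `M = lcm(a₁,…,aₙ)`,
`P(b)` is a polynomial of degree at most `n−1` in `⌊b/M⌋` whose constant term is `P(r)`. -/
theorem stmt_5 (n : ℕ) (hn : 2 ≤ n) (a : Fin n → ℕ)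
    (ha : ∀ i, 0 < a i)
    (M : ℕ) (hM : M = Finset.univ.lcm a)
    (r : ℕ) (hr : r < M)
    (P : ℤ → ℕ)
    (hP : ∀ e : ℤ, P e = Nat.card {x : Fin n → ℕ // ∑ i, (a i : ℤ) * x i = e}) :
    ∃ c : ℕ → ℚ, c (n - 1) = (P (r : ℤ) : ℚ) ∧
      ∀ b : ℕ, b % M = r →
        (P (b : ℤ) : ℚ) = ∑ i ∈ Finset.range n, c i * ((b / M : ℕ) : ℚ) ^ (n - 1 - i) := by
  have hM0 : 0 < M := by omega
  have had : ∀ i, a i * (M / a i) = M := fun i =>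
    Nat.mul_div_cancel' (hM ▸ Finset.dvd_lcm (Finset.mem_univ i))
  have hs : ∀ z : (∀ i, Fin (M / a i)), ∑ i, a i * (z i : ℕ) < n * M := by
    intro z
    have : ∑ i, a i * (z i : ℕ) < ∑ _i : Fin n, M := by
      refine Finset.sum_lt_sum_of_nonempty ⟨⟨0, by omega⟩, Finset.mem_univ _⟩ fun i _ => ?_
      calc a i * (z i : ℕ) < a i * (M / a i) := Nat.mul_lt_mul_of_pos_left (z i).2 (ha i)
        _ = M := had i
    simpa using this
  have hcount : ∀ q : ℕ, P ((q * M + r : ℕ) : ℤ) = ∑ z : (∀ i, Fin (M / a i)),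
      if (∑ i, a i * (z i : ℕ)) % M = r then
        (q + (n - 1 - (∑ i, a i * (z i : ℕ)) / M)).choose (n - 1) else 0 := by
    intro q
    rw [hP, Nat.card_congr (Equiv.subtypeEquivRight
      (q := fun x : Fin n → ℕ => ∑ i, a i * x i = q * M + r) fun x => by norm_cast),
      card_solutions a (fun i => M / a i) M _ hM0 had]
    exact Finset.sum_congr rfl fun z _ => card_fiber n M _ q r (by omega) hr (hs z)
  choose p hpdeg hpeval using fun m => exists_poly_choose m (n - 1)
  let f : Polynomial ℚ := ∑ z : (∀ i, Fin (M / a i)),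
    if (∑ i, a i * (z i : ℕ)) % M = r then p (n - 1 - (∑ i, a i * (z i : ℕ)) / M) else 0
  have hfdeg : f.natDegree ≤ n - 1 := by
    refine Polynomial.natDegree_sum_le_of_forall_le _ _ fun z _ => ?_
    split_ifs
    · exact hpdeg _
    · simp
  have hfeval : ∀ q : ℕ, f.eval (q : ℚ) = (P ((q * M + r : ℕ) : ℤ) : ℚ) := by
    intro q
    rw [hcount q, Polynomial.eval_finsetSum, Nat.cast_sum]
    refine Finset.sum_congr rfl fun z _ => ?_
    split_ifs
    · exact hpeval _ q
    · simp
  refine ⟨fun i => f.coeff (n - 1 - i), ?_, fun b hb => ?_⟩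
  · have h0 := hfeval 0
    simp only [Nat.cast_zero, zero_mul, zero_add] at h0
    rw [← h0]
    beta_reduce
    rw [Nat.sub_self, Polynomial.coeff_zero_eq_eval_zero]
  · have h1 : b / M * M + r = b := by rw [← hb, mul_comm, Nat.div_add_mod]
    have h2 := hfeval (b / M)
    rw [h1] at h2
    rw [← h2, Polynomial.eval_eq_sum_range' (n := n) (by omega), ← Finset.sum_range_reflect]
end

section
/- Let n ≥ 2 and let a₁,...,aₙ be positive integers with gcd(a₁,...,aₙ) = 1, and let M = lcm(a₁,...,aₙ). Fix r ∈ {0, 1, ..., M−1}, set s = ⌊n − (∑_{i=1}^n aᵢ + r)/M⌋, and for each integer k ≥ 0 set l_k = ∑_{j=0}^{k} (−1)^j · C(n,j) · P(r + (k−j)M). Then ∑_{k=0}^{s} l_k = M^{n−1}/(a₁a₂⋯aₙ) (an equality of rational numbers; in particular M^{n−1}/(a₁a₂⋯aₙ) is an integer). -/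
/-!
The generating function of `P` is `∏ 1 / (1 - X ^ aᵢ)`. Since `aᵢ ∣ M`, multiplying by `(1 - X ^ M) ^ n`
gives the polynomial `Q = ∏ (1 + X ^ aᵢ + ⋯ + X ^ (M - aᵢ))`, so `l_k` is the coefficient of
`X ^ (r + k M)` in `Q`: the number of `y` in the box `∏ [0, M / aᵢ)` with `∑ aᵢ yᵢ = r + k M`
(`restrictedGeom_mul`, `coeff_mul_one_sub_pow`, `coeff_prod_restrictedGeom`).

On the box `∑ aᵢ yᵢ ≤ n M - ∑ aᵢ`, and `r + k M ≤ n M - ∑ aᵢ` exactly when `k ≤ s`. Hence the sum of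
the `l_k` up to `s` counts all `y` in the box with `∑ aᵢ yᵢ ≡ r` modulo `M`. The map
`y ↦ ∑ aᵢ yᵢ` is a homomorphism `∏ ℤ/(M / aᵢ) → ℤ/M`, surjective because the `aᵢ` have greatest common
divisor `1`, so all its fibres have `(∏ M / aᵢ) / M = M ^ (n - 1) / ∏ aᵢ` elements
(`card_box_residue`).
-/

/-- For `0 < a`, the generating function `∑ t, X ^ (a * t)` over those `t` that satisfy `S`. -/
noncomputable def restrictedGeom (a : ℕ) (S : ℕ → Prop) : PowerSeries ℤ :=
  open Classical in PowerSeries.mk fun c => if a ∣ c ∧ S (c / a) then 1 else 0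

/-- The number of `x` with `S i (x i)` for all `i` and `∑ aᵢ xᵢ = c` is the coefficient of `X ^ c`
in the product of the corresponding generating functions. -/
lemma coeff_prod_restrictedGeom {n : ℕ} (a : Fin n → ℕ) (ha : ∀ i, 0 < a i)
    (S : Fin n → ℕ → Prop) (c : ℕ) :
    PowerSeries.coeff c (∏ i, restrictedGeom (a i) (S i)) =
      (Nat.card {x : Fin n → ℕ // (∀ i, S i (x i)) ∧ ∑ i, a i * x i = c} : ℤ) := by
  classical
  rw [PowerSeries.coeff_prod]
  simp only [restrictedGeom, PowerSeries.coeff_mk]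
  simp_rw [Finset.prod_ite_zero, Finset.prod_const_one]
  rw [Finset.sum_boole]
  congr 1
  rw [← Nat.card_eq_finsetCard]
  refine Nat.card_congr
    { toFun := fun f => ⟨fun i => f.1 i / a i, ?_, ?_⟩
      invFun := fun x => ⟨Finsupp.equivFunOnFinite.symm fun i => a i * x.1 i, ?_⟩
      left_inv := ?_
      right_inv := ?_ }
  · have := f.2
    simp only [Finset.mem_filter, Finset.mem_univ, true_imp_iff] at this
    exact fun i => (this.2 i).2
  · have := f.2
    simp only [Finset.mem_filter, Finset.mem_univ, true_imp_iff, Finset.mem_finsuppAntidiag] at this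
    simp_rw [fun i => Nat.mul_div_cancel' (this.2 i).1]
    exact this.1.1
  · simp [Finset.mem_finsuppAntidiag, x.2.2, fun i => Nat.mul_div_cancel_left (x.1 i) (ha i), x.2.1]
  · intro f
    have := f.2
    simp only [Finset.mem_filter, Finset.mem_univ, true_imp_iff] at this
    ext i
    simp [Nat.mul_div_cancel' (this.2 i).1]
  · intro x
    ext i
    simp [Nat.mul_div_cancel_left _ (ha i)]

/-- Multiplying the full geometric series in `X ^ a` by `1 - X ^ M` truncates it below `X ^ M`. -/
lemma restrictedGeom_mul {a M : ℕ} (ha : 0 < a) (hM : 0 < M) (h : a ∣ M) :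
    restrictedGeom a (fun _ => True) * (1 - PowerSeries.X ^ M) =
      restrictedGeom a (fun t => t < M / a) := by
  classical
  obtain ⟨m, rfl⟩ := h
  ext c
  rw [mul_sub, mul_one, map_sub, PowerSeries.coeff_mul_X_pow']
  simp only [restrictedGeom, PowerSeries.coeff_mk, and_true, Nat.mul_div_cancel_left m ha]
  by_cases hc : a ∣ c
  · obtain ⟨t, rfl⟩ := hc
    simp only [dvd_mul_right, if_true, true_and, Nat.mul_div_cancel_left t ha,
      mul_le_mul_iff_right₀ ha, ← Nat.mul_sub]
    split_ifs <;> omega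
  · have : ¬ (a * m ≤ c ∧ a ∣ c - a * m) := by
      rintro ⟨h1, h2⟩
      exact hc ((Nat.dvd_sub_iff_left h1 (dvd_mul_right _ _)).1 h2)
    simp only [hc, false_and, if_false]
    split_ifs <;> first | rfl | tauto

/-- Comparing coefficients in `F * (1 - X ^ M) ^ n = Q` at an exponent `r + k * M`. -/
lemma coeff_mul_one_sub_pow (F : PowerSeries ℤ) {M r : ℕ} (hr : r < M) (n k : ℕ) :
    PowerSeries.coeff (r + k * M) (F * (1 - PowerSeries.X ^ M) ^ n) =
      ∑ j ∈ Finset.range (k + 1),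
        (-1 : ℤ) ^ j * (n.choose j) * PowerSeries.coeff (r + (k - j) * M) F := by
  have h1 : (1 - PowerSeries.X ^ M : PowerSeries ℤ) ^ n =
      ∑ j ∈ Finset.range (n + 1),
        PowerSeries.C ((-1 : ℤ) ^ j * (n.choose j)) * PowerSeries.X ^ (j * M) := by
    rw [sub_eq_neg_add, add_pow]
    refine Finset.sum_congr rfl fun j _ => ?_
    rw [neg_pow, ← pow_mul, mul_comm M j]
    simp
    ring
  rw [h1, Finset.mul_sum, map_sum]
  simp_rw [mul_left_comm F, PowerSeries.coeff_C_mul, PowerSeries.coeff_mul_X_pow']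
  have e1 : Finset.range (n + 1) ⊆ Finset.range (n + k + 1) := by
    intro x; simp; omega
  have e2 : Finset.range (k + 1) ⊆ Finset.range (n + k + 1) := by
    intro x; simp; omega
  have key : ∀ j, j * M ≤ r + k * M ↔ j ≤ k := by
    intro j
    constructor
    · intro h
      by_contra hlt
      have : (k + 1) * M ≤ j * M := Nat.mul_le_mul_right _ (by omega)
      rw [add_mul] at this
      omega
    · intro h
      have := Nat.mul_le_mul_right M h
      omega
  rw [Finset.sum_subset e1, eq_comm, Finset.sum_subset_zero_on_sdiff e2]
  · intro j hj
    have : ¬ j * M ≤ r + k * M := by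
      rw [key]; simp at hj; omega
    simp [this]
  · intro j hj
    have hj' : j ≤ k := by simp at hj; omega
    rw [if_pos ((key j).2 hj'), Nat.add_sub_assoc (Nat.mul_le_mul_right _ hj'), ← Nat.sub_mul]
  · intro j _ hj
    have : n.choose j = 0 := Nat.choose_eq_zero_of_lt (by simp at hj; omega)
    simp [this]

/-- If `M` divides every `aᵢ * mᵢ`, then `y ↦ ∑ aᵢ yᵢ` descends to a homomorphism
`∏ ℤ/mᵢ → ℤ/M`, whose range contains every `aᵢ`. -/
lemma exists_hom {n : ℕ} (a m : Fin n → ℕ) (M : ℕ) (h : ∀ i, M ∣ a i * m i)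
    [∀ i, NeZero (m i)] :
    ∃ φ : ((i : Fin n) → ZMod (m i)) →+ ZMod M,
      (∀ y, φ y = ((∑ i, a i * (y i).val : ℕ) : ZMod M)) ∧
        ∀ i, (a i : ZMod M) ∈ φ.range := by
  have hz (i) : ((AddMonoidHom.mulLeft (a i : ZMod M)).comp (Int.castAddHom (ZMod M))) (m i) = 0 := by
    have := (ZMod.natCast_eq_zero_iff _ _).2 (h i)
    simpa using this
  have hlift (i) (z : ℤ) : ZMod.lift (m i) ⟨_, hz i⟩ z = a i * (z : ZMod M) := by
    rw [ZMod.lift_coe]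
    rfl
  refine ⟨∑ i, (ZMod.lift (m i) ⟨_, hz i⟩).comp (Pi.evalAddMonoidHom _ i), fun y => ?_,
    fun i => ⟨Pi.single i 1, ?_⟩⟩
  · simp only [AddMonoidHom.finsetSum_apply, AddMonoidHom.comp_apply, Pi.evalAddMonoidHom_apply]
    rw [Nat.cast_sum]
    refine Finset.sum_congr rfl fun i _ => ?_
    have := hlift i (y i).val
    simpa using this
  · simp only [AddMonoidHom.finsetSum_apply, AddMonoidHom.comp_apply, Pi.evalAddMonoidHom_apply]
    rw [Finset.sum_eq_single i]
    · have := hlift i 1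
      simpa using this
    · intro j _ hj
      rw [Pi.single_eq_of_ne hj, map_zero]
    · simp

/-- A subgroup of `ℤ/M` containing integers with greatest common divisor `1` is everything. -/
lemma eq_top_of_gcd_eq_one {n : ℕ} (a : Fin n → ℕ) (hgcd : Finset.univ.gcd a = 1) (M : ℕ)
    (H : AddSubgroup (ZMod M)) (hH : ∀ i, (a i : ZMod M) ∈ H) : H = ⊤ := by
  obtain ⟨d, hd⟩ := Int.subgroup_cyclic (H.comap (Int.castAddHom (ZMod M)))
  have hmem (z : ℤ) : (z : ZMod M) ∈ H ↔ d ∣ z := by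
    have : z ∈ H.comap (Int.castAddHom (ZMod M)) ↔ (z : ZMod M) ∈ H := Iff.rfl
    rw [← this, hd, ← AddSubgroup.zmultiples_eq_closure, Int.mem_zmultiples_iff]
  have hdvd : d.natAbs ∣ 1 := by
    rw [← hgcd]
    refine Finset.dvd_gcd fun i _ => ?_
    rw [← Int.natCast_dvd_natCast, Int.natAbs_dvd, ← hmem]
    simpa using hH i
  rw [eq_top_iff]
  intro z _
  obtain ⟨w, rfl⟩ := ZMod.intCast_surjective z
  rw [hmem, ← Int.natAbs_dvd, Nat.dvd_one.1 hdvd]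
  simp

/-- Each residue class modulo `M` is hit equally often by `∑ aᵢ yᵢ` on the box `∏ [0, mᵢ)`, because
the fibres of a surjective homomorphism of finite groups have the same size. -/
lemma card_box_residue {n : ℕ} (a m : Fin n → ℕ) (M : ℕ) (hM : 0 < M) (hm : ∀ i, 0 < m i)
    (hgcd : Finset.univ.gcd a = 1) (h : ∀ i, M ∣ a i * m i) (r : ℕ) :
    ((Fintype.piFinset fun i => Finset.range (m i)).filter
      fun y => ((∑ i, a i * y i : ℕ) : ZMod M) = r).card * M = ∏ i, m i := by
  classical
  have : NeZero M := ⟨hM.ne'⟩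
  have : ∀ i, NeZero (m i) := fun i => ⟨(hm i).ne'⟩
  obtain ⟨φ, hφ, hrange⟩ := exists_hom a m M h
  have hsurj : φ.range = ⊤ := eq_top_of_gcd_eq_one a hgcd M _ hrange
  have hfib : ∀ c : ZMod M, (Finset.univ.filter fun y => φ y = c).card =
      (Finset.univ.filter fun y => φ y = (r : ZMod M)).card := fun c =>
    AddMonoidHom.card_fiber_eq_of_mem_range φ (by rw [← AddMonoidHom.coe_range, hsurj]; trivial)
      (by rw [← AddMonoidHom.coe_range, hsurj]; trivial)
  have htot := Finset.card_eq_sum_card_fiberwise (f := φ) (s := Finset.univ) (t := Finset.univ)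
    (fun _ _ => Finset.mem_coe.2 (Finset.mem_univ _))
  simp_rw [hfib, Finset.sum_const, Finset.card_univ, Fintype.card_pi, ZMod.card, smul_eq_mul] at htot
  rw [htot, mul_comm]
  congr 1
  symm
  refine Finset.card_bij (fun y _ i => (y i).val) ?_ ?_ ?_
  · intro y hy
    simp only [Finset.mem_filter, Finset.mem_univ, true_and, hφ] at hy
    simp only [Finset.mem_filter, Fintype.mem_piFinset, Finset.mem_range, hy, and_true]
    exact fun i => ZMod.val_lt _
  · intro y _ y' _ hyy
    funext i
    exact ZMod.val_injective _ (congrFun hyy i)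
  · intro y hy
    simp only [Finset.mem_filter, Fintype.mem_piFinset, Finset.mem_range] at hy
    refine ⟨fun i => (y i : ZMod (m i)), ?_, ?_⟩
    · simp only [Finset.mem_filter, Finset.mem_univ, true_and, hφ, ZMod.val_natCast,
        Nat.mod_eq_of_lt (hy.1 _), hy.2]
    · funext i
      rw [ZMod.val_natCast, Nat.mod_eq_of_lt (hy.1 i)]

lemma sum_Icc_zero_int (s : ℤ) (f : ℤ → ℤ) :
    ∑ k ∈ Finset.Icc (0 : ℤ) s, f k = ∑ k ∈ Finset.range (s + 1).toNat, f k := by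
  refine Finset.sum_bij' (fun k _ => k.toNat) (fun k _ => (k : ℤ)) ?_ ?_ ?_ ?_ ?_
  · intro k hk; simp only [Finset.mem_Icc, Finset.mem_range] at *; omega
  · intro k hk; simp only [Finset.mem_Icc, Finset.mem_range] at *; omega
  · intro k hk; simp only [Finset.mem_Icc] at *; omega
  · intro k hk; simp
  · intro k hk
    simp only [Finset.mem_Icc] at hk
    rw [Int.toNat_of_nonneg hk.1]

/-- formula (3.11): if `gcd(a₁,…,aₙ) = 1`, `M = lcm(a₁,…,aₙ)`,
`0 ≤ r < M`, `s = ⌊n − (∑aᵢ + r)/M⌋` and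
`l_k = ∑_{j=0}^{k} (−1)^j C(n,j) P(r + (k−j)M)`, then
`∑_{k=0}^{s} l_k = M^{n−1}/(a₁⋯aₙ)` as rational numbers. -/
theorem stmt_7 (n : ℕ) (hn : 2 ≤ n) (a : Fin n → ℕ)
    (ha : ∀ i, 0 < a i) (hgcd : Finset.univ.gcd a = 1)
    (M : ℕ) (hM : M = Finset.univ.lcm a)
    (r : ℕ) (hr : r < M)
    (P : ℤ → ℕ)
    (hP : ∀ e : ℤ, P e = Nat.card {x : Fin n → ℕ // ∑ i, (a i : ℤ) * x i = e})
    (s : ℤ)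
    (hs : s = ⌊(n : ℚ) - ((∑ i, (a i : ℚ)) + r) / M⌋)
    (l : ℤ → ℤ)
    (hl : ∀ k : ℤ, l k =
      ∑ j ∈ Finset.Icc (0 : ℤ) k,
        (-1 : ℤ) ^ j.toNat * (n.choose j.toNat) * (P ((r : ℤ) + (k - j) * M) : ℤ)) :
    ((∑ k ∈ Finset.Icc (0 : ℤ) s, l k : ℤ) : ℚ) =
      (M : ℚ) ^ (n - 1) / ∏ i, (a i : ℚ) := by
  classical
  have hMpos : 0 < M := by omega
  have hdvd (i) : a i ∣ M := hM ▸ Finset.dvd_lcm (Finset.mem_univ i)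
  have hmul (i) : a i * (M / a i) = M := Nat.mul_div_cancel' (hdvd i)
  have hm (i) : 0 < M / a i := Nat.div_pos (Nat.le_of_dvd hMpos (hdvd i)) (ha i)
  set box := Fintype.piFinset fun i => Finset.range (M / a i) with hbox
  have hPc (c : ℕ) : (P c : ℤ) =
      PowerSeries.coeff c (∏ i, restrictedGeom (a i) fun _ => True) := by
    rw [coeff_prod_restrictedGeom a ha, hP]
    simp only [implies_true, true_and]
    norm_cast
  have hQc (c : ℕ) : PowerSeries.coeff c (∏ i, restrictedGeom (a i) fun t => t < M / a i) =
      ((box.filter fun y => ∑ i, a i * y i = c).card : ℤ) := by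
    rw [coeff_prod_restrictedGeom a ha, Nat.subtype_card]
    simp [hbox]
  have hprod : (∏ i, restrictedGeom (a i) fun _ => True) * (1 - PowerSeries.X ^ M) ^ n =
      ∏ i, restrictedGeom (a i) fun t => t < M / a i := by
    simp_rw [← fun i => restrictedGeom_mul (ha i) hMpos (hdvd i), Finset.prod_mul_distrib]
    simp
  have hlk (k : ℕ) : l k = ((box.filter fun y => ∑ i, a i * y i = r + k * M).card : ℤ) := by
    rw [← hQc, ← hprod, coeff_mul_one_sub_pow _ hr, hl, sum_Icc_zero_int]
    refine Finset.sum_congr (by congr 1) fun j hj => ?_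
    have hj' : j ≤ k := by simp at hj; omega
    rw [← hPc]
    push_cast [Nat.cast_sub hj']
    simp
  -- The quotient `⌊∑ aᵢ yᵢ / M⌋` is at most `s` since `∑ aᵢ yᵢ ≤ n M - ∑ aᵢ` on the box.
  have hle : ∀ y ∈ box, ((∑ i, a i * y i : ℕ) : ZMod M) = r →
      ∑ i, a i * y i = r + (∑ i, a i * y i) / M * M ∧
        (∑ i, a i * y i) / M < (s + 1).toNat := by
    intro y hy hyr
    have hmod : (∑ i, a i * y i) % M = r := by
      have := (ZMod.natCast_eq_natCast_iff' _ _ _).1 hyr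
      rwa [Nat.mod_eq_of_lt hr] at this
    have hdiv := Nat.mod_add_div' (∑ i, a i * y i) M
    rw [hmod] at hdiv
    refine ⟨hdiv.symm, ?_⟩
    set k := (∑ i, a i * y i) / M
    have hbound : ∑ i, a i * y i + ∑ i, a i ≤ n * M := by
      rw [← Finset.sum_add_distrib]
      calc ∑ i, (a i * y i + a i) ≤ ∑ i : Fin n, M := Finset.sum_le_sum fun i _ => by
            have : y i < M / a i := by simpa using (Fintype.mem_piFinset.1 hy) i
            calc a i * y i + a i = a i * (y i + 1) := by ring
              _ ≤ a i * (M / a i) := Nat.mul_le_mul_left _ this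
              _ = M := hmul i
        _ = n * M := by simp
    rw [← hdiv] at hbound
    have hks : (k : ℤ) ≤ s := by
      rw [hs, Int.le_floor]
      have hMq : (0 : ℚ) < M := by exact_mod_cast hMpos
      have hb : ((r : ℚ) + k * M + ∑ i, (a i : ℚ)) ≤ n * M := by exact_mod_cast hbound
      rw [le_sub_comm, div_le_iff₀ hMq]
      push_cast
      linarith
    omega
  have hsum : ∑ k ∈ Finset.Icc (0 : ℤ) s, l k =
      ((box.filter fun y => ((∑ i, a i * y i : ℕ) : ZMod M) = r).card : ℤ) := by
    rw [sum_Icc_zero_int, Finset.card_eq_sum_card_fiberwise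
      (f := fun y => (∑ i, a i * y i) / M) (t := Finset.range (s + 1).toNat)]
    · rw [Nat.cast_sum]
      refine Finset.sum_congr rfl fun k _ => ?_
      rw [hlk, Finset.filter_filter]
      congr 2
      refine Finset.filter_congr fun y hy => ⟨fun h => ?_, fun h => ?_⟩
      · rw [h]
        refine ⟨by simp, ?_⟩
        rw [Nat.add_mul_div_right _ _ hMpos, Nat.div_eq_of_lt hr, zero_add]
      · rw [← h.2]
        exact (hle y hy h.1).1
    · intro y hy
      obtain ⟨h1, h2⟩ := Finset.mem_filter.1 (Finset.mem_coe.1 hy)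
      exact Finset.mem_coe.2 (Finset.mem_range.2 (hle y h1 h2).2)
  have hcount := card_box_residue a (fun i => M / a i) M hMpos hm hgcd
    (fun i => (hmul i).symm.dvd) r
  rw [← hbox] at hcount
  have hpa : (∏ i, a i) * ∏ i, M / a i = M ^ n := by
    rw [← Finset.prod_mul_distrib]
    simp [hmul]
  have hpos : (∏ i, (a i : ℚ)) ≠ 0 :=
    Finset.prod_ne_zero_iff.2 fun i _ => by exact_mod_cast (ha i).ne'
  rw [hsum, eq_div_iff hpos]
  have hMq : (M : ℚ) ≠ 0 := by exact_mod_cast hMpos.ne'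
  apply mul_right_cancel₀ hMq
  rw [← pow_succ, Nat.sub_add_cancel (by omega)]
  rw [← hcount] at hpa
  have := congrArg (Nat.cast : ℕ → ℚ) hpa
  push_cast at this ⊢
  linarith
end

section
/- Let n ≥ 2 and let a₁,...,aₙ be positive integers with gcd(a₁,...,aₙ) = 1, and let M = lcm(a₁,...,aₙ). Fix r ∈ {0, 1, ..., M−1} and set s = ⌊n − (∑_{i=1}^n aᵢ + r)/M⌋, and assume s ≥ 0. Then ∑_{j=0}^{s} (−1)^j · C(n−1, j) · P(r + (s−j)M) = M^{n−1}/(a₁a₂⋯aₙ), i.e. P(r+sM) − C(n−1,1)·P(r+(s−1)M) + C(n−1,2)·P(r+(s−2)M) − ⋯ + (−1)^s·C(n−1,s)·P(r) = M^{n−1}/(a₁a₂⋯aₙ). -/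
/-!
The alternating sum is the coefficient of `X ^ (r + s M)` in `G = F (1 - X ^ M) ^ (n - 1)`, where
`F = ∑ P(k) X ^ k = ∏ 1 / (1 - X ^ aᵢ)`. Since `aᵢ ∣ M`, the product
`G (1 - X ^ M) = ∏ (1 - X ^ M) / (1 - X ^ aᵢ) = Q` is a polynomial of degree at most `n M - ∑ aᵢ`,
and `G (1 - X ^ aᵢ)` is a polynomial for every `i`.

Hence the coefficients of `G` are eventually periodic with period `aᵢ` for every `i`, so, as
`gcd(a₁, …, aₙ) = 1`, they are eventually equal to a constant `c`
(`eventually_const_of_periods`). Comparing partial sums of coefficients in `G (1 - X ^ M) = Q` gives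
`M c = Q(1) = ∏ M / aᵢ` (`mul_const_eq_eval_one`), that is, `c = M ^ (n - 1) / ∏ aᵢ`.

Finally, `s` is the index for which `r + (s + 1) M` is already beyond `n M - ∑ aᵢ`, so the
coefficient of `G` at `r + s M` agrees with those at `r + (s + t) M` for all `t`, and is `c`.
-/

open PowerSeries in
/-- The denumerant generating function is `∏ 1 / (1 - X ^ aᵢ)`. -/
lemma denumerant_gf (n : ℕ) (a : Fin n → ℕ) (ha : ∀ i, 0 < a i) (P : ℤ → ℕ)
    (hP : ∀ e : ℤ, P e = Nat.card {x : Fin n → ℕ // ∑ i, (a i : ℤ) * x i = e}) :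
    (PowerSeries.mk fun k : ℕ => (P k : ℚ)) * ∏ i, (1 - (X : ℚ⟦X⟧) ^ a i) = 1 := by
  have h1 : (PowerSeries.mk fun k : ℕ => (P k : ℚ))
      = ∏ i, PowerSeries.mk fun k : ℕ => if a i ∣ k then (1 : ℚ) else 0 := by
    ext k
    rw [coeff_mk, coeff_prod]
    simp only [coeff_mk]
    have h2 : ∀ l : Fin n →₀ ℕ, ∏ i, (if a i ∣ l i then (1 : ℚ) else 0)
        = if ∀ i, a i ∣ l i then 1 else 0 := by
      intro l
      rw [Finset.prod_ite_zero]
      simp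
    rw [Finset.sum_congr rfl fun l _ => h2 l, Finset.sum_boole, hP]
    congr 1
    refine (Nat.card_congr ?_).trans (Nat.card_eq_fintype_card.trans (Fintype.card_coe _))
    exact
      { toFun := fun x => ⟨Finsupp.equivFunOnFinite.symm fun i => a i * x.1 i, by
          have := x.2
          rw [Finset.mem_filter, Finset.mem_finsuppAntidiag]
          refine ⟨⟨?_, Finset.subset_univ _⟩, fun i => ?_⟩
          · simp only [Finsupp.equivFunOnFinite_symm_apply_apply]
            exact_mod_cast this
          · simp⟩
        invFun := fun l => ⟨fun i => l.1 i / a i, by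
          have := l.2
          rw [Finset.mem_filter, Finset.mem_finsuppAntidiag] at this
          have h3 : ∑ i, a i * (l.1 i / a i) = k := by
            exact (Finset.sum_congr rfl fun i _ => Nat.mul_div_cancel' (this.2 i)).trans this.1.1
          exact_mod_cast h3⟩
        left_inv := by
          intro x
          ext i
          simp [Nat.mul_div_cancel_left _ (ha i)]
        right_inv := by
          intro l
          have := l.2
          rw [Finset.mem_filter] at this
          ext i
          simp [Nat.mul_div_cancel' (this.2 i)] }
  rw [h1, ← Finset.prod_mul_distrib]
  refine Finset.prod_eq_one fun i _ => ?_
  ext k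
  rw [mul_sub, mul_one, map_sub, coeff_mul_X_pow', coeff_mk, coeff_one]
  have := ha i
  by_cases hk : a i ≤ k
  · have hk0 : k ≠ 0 := by omega
    have hd : a i ∣ k - a i ↔ a i ∣ k := by
      rw [Nat.dvd_sub_iff_left hk dvd_rfl]
    simp [hk, hk0, coeff_mk, hd]
  · rcases Nat.eq_zero_or_pos k with rfl | hk0
    · simp [hk]
    · have : ¬ a i ∣ k := fun h => hk (Nat.le_of_dvd hk0 h)
      simp [hk, this, hk0.ne']

open PowerSeries in
lemma coeff_mul_one_sub_X_pow_pow (A : ℚ⟦X⟧) (M m N : ℕ) :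
    coeff N (A * (1 - X ^ M) ^ m) = ∑ j ∈ Finset.range (m + 1),
      (-1 : ℚ) ^ j * (m.choose j : ℚ) * (if j * M ≤ N then coeff (N - j * M) A else 0) := by
  have h : A * (1 - (X : ℚ⟦X⟧) ^ M) ^ m
      = ∑ j ∈ Finset.range (m + 1), C ((-1 : ℚ) ^ j * (m.choose j : ℚ)) * (A * X ^ (j * M)) := by
    rw [sub_eq_add_neg, add_comm, add_pow, Finset.mul_sum]
    refine Finset.sum_congr rfl fun j _ => ?_
    rw [neg_pow, ← pow_mul, mul_comm M j]
    simp only [one_pow, map_mul, map_pow, map_neg, map_one, map_natCast]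
    ring
  rw [h, map_sum]
  refine Finset.sum_congr rfl fun j _ => ?_
  rw [coeff_C_mul, coeff_mul_X_pow']

open PowerSeries in
lemma coeff_add_of_mul_eq (G : ℚ⟦X⟧) (p : Polynomial ℚ) (m : ℕ)
    (h : G * (1 - X ^ m) = (p : ℚ⟦X⟧)) (k : ℕ) :
    coeff (k + m) G = p.coeff (k + m) + coeff k G := by
  have := congrArg (coeff (k + m)) h
  rw [mul_sub, mul_one, map_sub, coeff_mul_X_pow, Polynomial.coeff_coe] at this
  linarith

open PowerSeries in
lemma coeff_of_mul_eq_of_lt (G : ℚ⟦X⟧) (p : Polynomial ℚ) (m : ℕ)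
    (h : G * (1 - X ^ m) = (p : ℚ⟦X⟧)) (k : ℕ) (hk : k < m) :
    coeff k G = p.coeff k := by
  have := congrArg (coeff k) h
  rw [mul_sub, mul_one, map_sub, coeff_mul_X_pow', if_neg (by omega),
    Polynomial.coeff_coe] at this
  linarith

/-- A sequence that is eventually periodic with periods of gcd `1` is eventually constant: the
eventual periods form a subgroup of `ℤ`. -/
lemma eventually_const_of_periods {n : ℕ} (a : Fin n → ℕ) (hgcd : Finset.univ.gcd a = 1)
    (g : ℕ → ℚ) (h : ∀ i, ∃ N, ∀ k, N ≤ k → g (k + a i) = g k) :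
    ∃ N c, ∀ k, N ≤ k → g k = c := by
  -- Indexing by `ℤ` makes negative periods meaningful; the values at negative indices are junk.
  let f : ℤ → ℚ := fun k => g k.toNat
  let K : AddSubgroup ℤ :=
    { carrier := {m | ∃ N : ℤ, ∀ k, N ≤ k → f (k + m) = f k}
      zero_mem' := ⟨0, by simp⟩
      add_mem' := by
        rintro x y ⟨N, hN⟩ ⟨N', hN'⟩
        refine ⟨max N (N' - x), fun k hk => ?_⟩
        rw [← add_assoc, hN' (k + x) (by grind), hN k (by grind)]
      neg_mem' := by
        rintro x ⟨N, hN⟩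
        refine ⟨N + x, fun k hk => ?_⟩
        rw [← hN (k + -x) (by linarith)]
        simp }
  have hK : ∀ i, (a i : ℤ) ∈ K := by
    intro i
    obtain ⟨N, hN⟩ := h i
    refine ⟨N, fun k hk => ?_⟩
    have := hN k.toNat (by omega)
    show g _ = g _
    rw [← this]
    congr 1
    omega
  obtain ⟨d, hd⟩ := Int.subgroup_cyclic K
  have hda : ∀ i, d ∣ (a i : ℤ) := by
    intro i
    have := hK i
    rwa [hd, ← AddSubgroup.zmultiples_eq_closure, Int.mem_zmultiples_iff] at this
  have hd1 : d.natAbs ∣ 1 := by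
    rw [← hgcd]
    exact Finset.dvd_gcd fun i _ => Int.natAbs_dvd_natAbs.mpr (hda i) |>.trans (by simp)
  have h1 : (1 : ℤ) ∈ K := by
    rw [hd, ← AddSubgroup.zmultiples_eq_closure, Int.mem_zmultiples_iff]
    exact Int.natAbs_dvd_natAbs.mp (by simpa using hd1)
  obtain ⟨N, hN⟩ := h1
  refine ⟨N.toNat, g N.toNat, fun k hk => ?_⟩
  induction k, hk using Nat.le_induction with
  | base => rfl
  | succ k hk ih =>
    rw [← ih]
    exact hN k (by omega)

open PowerSeries in
/-- If `G (1 - X ^ M)` is a polynomial `p` and the coefficients of `G` are eventually `c`,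
then `M c = p(1)`: both are the sum of `M` consecutive coefficients of `G` far out. -/
lemma mul_const_eq_eval_one (G : ℚ⟦X⟧) (p : Polynomial ℚ) (M : ℕ)
    (h : G * (1 - X ^ M) = (p : ℚ⟦X⟧)) (N : ℕ) (c : ℚ) (hc : ∀ k, N ≤ k → coeff k G = c) :
    M * c = p.eval 1 := by
  have key : ∀ k, ∑ i ∈ Finset.range (k + M), coeff i G
      = ∑ i ∈ Finset.range (k + M), p.coeff i + ∑ i ∈ Finset.range k, coeff i G := by
    intro k
    induction k with
    | zero =>
      simp only [zero_add, Finset.range_zero, Finset.sum_empty, add_zero]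
      exact Finset.sum_congr rfl fun i hi =>
        coeff_of_mul_eq_of_lt G p M h i (Finset.mem_range.mp hi)
    | succ k ih =>
      rw [show k + 1 + M = (k + M) + 1 by ring, Finset.sum_range_succ, ih, Finset.sum_range_succ,
        Finset.sum_range_succ, coeff_add_of_mul_eq G p M h]
      ring
  have h1 := key (N + p.natDegree + 1)
  rw [Finset.sum_range_add] at h1
  have h2 : ∑ i ∈ Finset.range M, coeff (N + p.natDegree + 1 + i) G = M * c := by
    rw [Finset.sum_congr rfl fun i _ => hc _ (by omega)]
    simp
  rw [h2] at h1
  rw [Polynomial.eval_eq_sum_range' (n := N + p.natDegree + 1 + M) (by omega)]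
  simp only [one_pow, mul_one]
  linarith

theorem stmt_8 (n : ℕ) (hn : 2 ≤ n) (a : Fin n → ℕ)
    (ha : ∀ i, 0 < a i) (hgcd : Finset.univ.gcd a = 1)
    (M : ℕ) (hM : M = Finset.univ.lcm a)
    (r : ℕ) (hr : r < M)
    (P : ℤ → ℕ)
    (hP : ∀ e : ℤ, P e = Nat.card {x : Fin n → ℕ // ∑ i, (a i : ℤ) * x i = e})
    (s : ℤ)
    (hs : s = ⌊(n : ℚ) - ((∑ i, (a i : ℚ)) + r) / M⌋)
    (hs0 : 0 ≤ s) :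
    ∑ j ∈ Finset.Icc (0 : ℤ) s,
        (-1 : ℚ) ^ j.toNat * ((n - 1).choose j.toNat : ℚ) *
          (P ((r : ℤ) + (s - j) * M) : ℚ) =
      (M : ℚ) ^ (n - 1) / ∏ i, (a i : ℚ) := by
  have hM0 : 0 < M := by omega
  have hMq : (0 : ℚ) < M := by exact_mod_cast hM0
  have hdvd : ∀ i, a i ∣ M := fun i => hM ▸ Finset.dvd_lcm (Finset.mem_univ i)
  choose b hb using hdvd
  have hb0 : ∀ i, 0 < b i := fun i => Nat.pos_of_ne_zero fun h => by simp [hb i, h] at hM0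
  set F : PowerSeries ℚ := PowerSeries.mk fun k : ℕ => (P k : ℚ) with hF
  have hFprod := denumerant_gf n a ha P hP
  rw [← hF] at hFprod
  set G : PowerSeries ℚ := F * (1 - PowerSeries.X ^ M) ^ (n - 1) with hG
  let geo : Fin n → Polynomial ℚ := fun i => ∑ k ∈ Finset.range (b i), (Polynomial.X ^ a i) ^ k
  have hgeo : ∀ i, (1 - (PowerSeries.X : PowerSeries ℚ) ^ a i) * (geo i : PowerSeries ℚ)
      = 1 - PowerSeries.X ^ M := by
    intro i
    have h : (1 - (Polynomial.X : Polynomial ℚ) ^ a i) * geo i = 1 - Polynomial.X ^ M := by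
      rw [mul_neg_geom_sum, ← pow_mul, ← hb i]
    simpa using congrArg (fun p : Polynomial ℚ => (p : PowerSeries ℚ)) h
  have hcoe : ∀ t : Finset (Fin n), ((∏ i ∈ t, geo i : Polynomial ℚ) : PowerSeries ℚ)
      = ∏ i ∈ t, (geo i : PowerSeries ℚ) := fun t =>
    map_prod Polynomial.coeToPowerSeries.ringHom geo t
  set Q : Polynomial ℚ := ∏ i, geo i with hQ
  have hGM : G * (1 - PowerSeries.X ^ M) = (Q : PowerSeries ℚ) := by
    have hp : (1 - (PowerSeries.X : PowerSeries ℚ) ^ M) ^ n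
        = (∏ i, (1 - (PowerSeries.X : PowerSeries ℚ) ^ a i)) * (Q : PowerSeries ℚ) := by
      rw [hQ, hcoe, ← Finset.prod_mul_distrib, Finset.prod_congr rfl fun i _ => hgeo i]
      simp
    rw [hG, mul_assoc, ← pow_succ, show n - 1 + 1 = n by omega, hp, ← mul_assoc, hFprod, one_mul]
  have hne : (1 - (PowerSeries.X : PowerSeries ℚ) ^ M) ≠ 0 := by
    intro h
    have := congrArg (PowerSeries.coeff 0) h
    simp [hM0.ne'] at this
  have hGa : ∀ i, G * (1 - PowerSeries.X ^ a i)
      = ((∏ j ∈ Finset.univ.erase i, geo j : Polynomial ℚ) : PowerSeries ℚ) := by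
    intro i
    apply mul_right_cancel₀ hne
    rw [mul_right_comm, hGM, hQ, hcoe, hcoe, ← Finset.mul_prod_erase _ _ (Finset.mem_univ i),
      ← hgeo i]
    ring
  obtain ⟨N, c, hc⟩ := eventually_const_of_periods a hgcd (fun k => PowerSeries.coeff k G)
    fun i => ⟨(∏ j ∈ Finset.univ.erase i, geo j).natDegree + 1, fun k hk => by
      show PowerSeries.coeff _ G = _
      rw [coeff_add_of_mul_eq G _ _ (hGa i), Polynomial.coeff_eq_zero_of_natDegree_lt (by omega),
        zero_add]⟩
  have hMc := mul_const_eq_eval_one G Q M hGM N c hc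
  have hQ1 : Q.eval 1 = ∏ i, (b i : ℚ) := by
    simp [hQ, geo, Polynomial.eval_prod, Polynomial.eval_finsetSum]
  have hc' : c = (M : ℚ) ^ (n - 1) / ∏ i, (a i : ℚ) := by
    have hprod : (∏ i, (a i : ℚ)) * ∏ i, (b i : ℚ) = (M : ℚ) ^ n := by
      rw [← Finset.prod_mul_distrib,
        Finset.prod_congr rfl fun i _ => show (a i : ℚ) * b i = M by rw [hb i]; push_cast; rfl]
      simp
    have ha' : (∏ i, (a i : ℚ)) ≠ 0 :=
      Finset.prod_ne_zero_iff.mpr fun i _ => by exact_mod_cast (ha i).ne'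
    rw [eq_div_iff ha']
    apply mul_left_cancel₀ hMq.ne'
    rw [← mul_assoc, hMc, hQ1, mul_comm, hprod, ← pow_succ', show n - 1 + 1 = n by omega]
  have hdeg : Q.natDegree + ∑ i, a i ≤ n * M := by
    have h1 : Q.natDegree ≤ ∑ i, (geo i).natDegree := Polynomial.natDegree_prod_le _ _
    have h2 : ∀ i, (geo i).natDegree + a i ≤ M := by
      intro i
      have : (geo i).natDegree ≤ a i * (b i - 1) := by
        refine Polynomial.natDegree_sum_le_of_forall_le _ _ fun k hk => ?_
        rw [← pow_mul, Polynomial.natDegree_X_pow]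
        exact Nat.mul_le_mul_left _ (by have := Finset.mem_range.mp hk; omega)
      calc (geo i).natDegree + a i ≤ a i * (b i - 1) + a i := by omega
        _ = a i * (b i - 1 + 1) := by ring
        _ = M := by rw [Nat.sub_add_cancel (hb0 i), ← hb i]
    calc Q.natDegree + ∑ i, a i ≤ ∑ i, ((geo i).natDegree + a i) := by
          rw [Finset.sum_add_distrib]; omega
      _ ≤ ∑ _i : Fin n, M := Finset.sum_le_sum fun i _ => h2 i
      _ = n * M := by simp
  lift s to ℕ using hs0
  have hsdeg : Q.natDegree < r + (s + 1) * M := by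
    have h1 : (n : ℚ) - ((∑ i, (a i : ℚ)) + r) / M < s + 1 := by
      have := Int.lt_floor_add_one ((n : ℚ) - ((∑ i, (a i : ℚ)) + r) / M)
      rw [← hs] at this
      exact_mod_cast this
    rw [sub_lt_iff_lt_add, ← sub_lt_iff_lt_add', lt_div_iff₀ hMq] at h1
    have h2 : n * M < (∑ i, a i) + r + (s + 1) * M := by
      have : (n : ℚ) * M < (∑ i, (a i : ℚ)) + r + (s + 1) * M := by linarith
      exact_mod_cast this
    omega
  have hper : ∀ t, PowerSeries.coeff (r + s * M + t * M) G
      = PowerSeries.coeff (r + s * M) G := by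
    intro t
    induction t with
    | zero => simp
    | succ t ih =>
      rw [show r + s * M + (t + 1) * M = r + s * M + t * M + M by ring,
        coeff_add_of_mul_eq G Q M hGM, Polynomial.coeff_eq_zero_of_natDegree_lt, zero_add, ih]
      nlinarith [Nat.zero_le (t * M)]
  have hcoeff : PowerSeries.coeff (r + s * M) G = c := by
    rw [← hper N]
    exact hc _ (by nlinarith)
  rw [← hc', ← hcoeff, hG, coeff_mul_one_sub_X_pow_pow]
  have hL : ∑ j ∈ Finset.Icc (0 : ℤ) s, (-1 : ℚ) ^ j.toNat * ((n - 1).choose j.toNat : ℚ) *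
          (P ((r : ℤ) + (s - j) * M) : ℚ)
      = ∑ j ∈ Finset.range (s + 1), (-1 : ℚ) ^ j * ((n - 1).choose j : ℚ) *
          (P ((r : ℤ) + (s - j) * M) : ℚ) := by
    refine Finset.sum_bij' (fun j _ => j.toNat) (fun j _ => (j : ℤ)) ?_ ?_ ?_ ?_ ?_
    · intro j hj; rw [Finset.mem_Icc] at hj; rw [Finset.mem_range]; omega
    · intro j hj; rw [Finset.mem_range] at hj; rw [Finset.mem_Icc]; omega
    · intro j hj; rw [Finset.mem_Icc] at hj; simp [hj.1]
    · intro j hj; simp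
    · intro j hj; rw [Finset.mem_Icc] at hj; simp [hj.1]
  have hjs : ∀ j, j * M ≤ r + s * M ↔ j < s + 1 := by
    intro j
    constructor
    · intro h
      by_contra! hj
      nlinarith
    · intro h
      nlinarith
  rw [hL]
  have hterm : ∀ j ∈ Finset.range (s + 1),
      (P ((r : ℤ) + (s - j) * M) : ℚ)
        = if j * M ≤ r + s * M then PowerSeries.coeff (r + s * M - j * M) F else 0 := by
    intro j hj
    have hj' := (hjs j).mpr (Finset.mem_range.mp hj)
    rw [if_pos hj', hF, PowerSeries.coeff_mk, Nat.cast_sub hj']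
    congr 2
    push_cast
    ring
  rw [Finset.sum_congr rfl fun j hj => by rw [hterm j hj]]
  -- Terms with `j > n - 1` vanish because of the binomial coefficient, those with `j > s` because
  -- `r < M` puts the argument of `P` below zero.
  trans ∑ j ∈ Finset.range (max (s + 1) (n - 1 + 1)), (-1 : ℚ) ^ j * ((n - 1).choose j : ℚ) *
    (if j * M ≤ r + s * M then PowerSeries.coeff (r + s * M - j * M) F else 0)
  · refine Finset.sum_subset (Finset.range_subset_range.mpr (le_max_left _ _)) fun j _ hj => ?_
    rw [if_neg (by rw [hjs]; simpa using hj), mul_zero]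
  · refine (Finset.sum_subset (Finset.range_subset_range.mpr (le_max_right _ _))
      fun j _ hj => ?_).symm
    rw [Nat.choose_eq_zero_of_lt (by rw [Finset.mem_range] at hj; omega)]
    simp
end

section
/- Let n ≥ 2 and let a₁,...,aₙ be positive integers with gcd(a₁,...,aₙ) = 1, and let M = lcm(a₁,...,aₙ). Let b be a nonnegative integer and let r be the remainder of b modulo M. If r > (n−1)·M − ∑_{i=1}^n aᵢ, then P(r) = M^{n−1}/(a₁a₂⋯aₙ) and P(b) = (M^{n−1}/(a₁a₂⋯aₙ)) · C(⌊b/M⌋ + n − 1, n − 1). -/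
/-!
Put `mᵢ = M / aᵢ` and divide each `xᵢ` by `mᵢ`: `xᵢ = sᵢ + mᵢ qᵢ` with `0 ≤ sᵢ < mᵢ`. Then
`∑ aᵢ xᵢ = ∑ aᵢ sᵢ + M ∑ qᵢ`, and `∑ aᵢ sᵢ ≤ ∑ (M - aᵢ) = nM - ∑ aᵢ < r + M`. If the total is
`Mk + r` with `0 ≤ r < M`, then `∑ aᵢ sᵢ` is congruent to `r` modulo `M` and smaller than `r + M`,
which forces `∑ aᵢ sᵢ = r` and `∑ qᵢ = k`. So the number of solutions is the product of

* the number of residue vectors `s ∈ ∏ ℤ/mᵢ` with `∑ aᵢ sᵢ = r` in `ℤ/M`: the map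
  `s ↦ ∑ aᵢ sᵢ` is a homomorphism onto `ℤ/M` because the `aᵢ` have gcd `1`, so each fibre has
  `∏ mᵢ / M = M^(n-1) / ∏ aᵢ` elements (`card_residues_mul`);
* the number of `q ∈ ℕⁿ` with `∑ qᵢ = k`, which is `C(k + n - 1, n - 1)` (`card_quotients`).

The factorisation is `card_solutions`; the two claims are its cases `k = 0` and `k = ⌊b/M⌋`.
-/

namespace Denumerant

/-- The linear form `∑ aᵢ xᵢ` modulo `M` depends only on each `xᵢ` modulo `mᵢ`. -/
lemma exists_residueHom {n : ℕ} {a m : Fin n → ℕ} {M : ℕ} (ham : ∀ i, a i * m i = M) :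
    ∃ φ : (∀ i, ZMod (m i)) →+ ZMod M, ∀ z : Fin n → ℤ,
      φ (fun i => (z i : ZMod (m i))) = ((∑ i, (a i : ℤ) * z i : ℤ) : ZMod M) := by
  have h0 (i : Fin n) :
      ((Int.castAddHom (ZMod M)).comp (AddMonoidHom.mulLeft (a i : ℤ))) (m i : ℤ) = 0 := by
    have : ((a i * m i : ℕ) : ZMod M) = 0 := by rw [ham i]; simp
    simpa using this
  refine ⟨∑ i, (ZMod.lift (m i) ⟨_, h0 i⟩).comp (Pi.evalAddMonoidHom _ i), fun z => ?_⟩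
  simp [AddMonoidHom.finsetSum_apply]

lemma exists_bezout {n : ℕ} {a : Fin n → ℕ} (hgcd : Finset.univ.gcd a = 1) :
    ∃ z : Fin n → ℤ, ∑ i, (a i : ℤ) * z i = 1 := by
  obtain ⟨f, hf⟩ := Finset.gcd_eq_sum_mul Finset.univ (fun i => (a i : ℤ))
  set g := Finset.univ.gcd (fun i => (a i : ℤ)) with hg
  have h1 : g.natAbs ∣ 1 := by
    rw [← hgcd]
    refine Finset.dvd_gcd fun i _ => ?_
    have : g ∣ (a i : ℤ) := Finset.gcd_dvd (Finset.mem_univ i)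
    simpa using Int.natAbs_dvd_natAbs.2 this
  rcases Int.natAbs_eq_iff.1 (Nat.dvd_one.1 h1) with h | h
  · exact ⟨f, by rw [h] at hf; simpa [mul_comm] using hf.symm⟩
  · refine ⟨fun i => - f i, ?_⟩
    have : ∑ i, (a i : ℤ) * f i = -1 := by rw [h] at hf; simpa [mul_comm] using hf.symm
    simp [this]

/-- All fibres of a surjective homomorphism `∏ ℤ/mᵢ → ℤ/M` have `∏ mᵢ / M` elements. -/
lemma card_residues_mul {n : ℕ} {m : Fin n → ℕ} {M : ℕ} [NeZero M] [∀ i, NeZero (m i)]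
    (φ : (∀ i, ZMod (m i)) →+ ZMod M) (hφ : Function.Surjective φ) (c : ZMod M) :
    Nat.card {s // φ s = c} * M = ∏ i, m i := by
  classical
  have hfib (d : ZMod M) : Fintype.card {s // φ s = d} = Fintype.card {s // φ s = c} := by
    rw [Fintype.card_subtype, Fintype.card_subtype]
    exact AddMonoidHom.card_fiber_eq_of_mem_range φ (hφ d) (hφ c)
  have h := Fintype.card_congr (Equiv.sigmaFiberEquiv φ)
  rw [Fintype.card_sigma, Finset.sum_congr rfl fun d _ => hfib d] at h
  simp only [Finset.sum_const, Finset.card_univ, ZMod.card, smul_eq_mul, Fintype.card_pi] at h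
  rw [Nat.card_eq_fintype_card, mul_comm, h]

lemma card_quotients (n k : ℕ) (hn : 0 < n) :
    Nat.card {q : Fin n → ℕ // ∑ i, q i = k} = (k + n - 1).choose (n - 1) := by
  classical
  rw [← Nat.card_congr (Sym.equivNatSumOfFintype (Fin n) k), Nat.card_eq_fintype_card,
    Sym.card_sym_eq_choose, Fintype.card_fin, add_comm n k]
  exact Nat.choose_symm_of_eq_add (by omega)

/-- Division with remainder `xᵢ = sᵢ + mᵢ qᵢ` in every coordinate. -/
def divModEquiv {n : ℕ} (m : Fin n → ℕ) [∀ i, NeZero (m i)] :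
    (Fin n → ℕ) ≃ (∀ i, ZMod (m i)) × (Fin n → ℕ) where
  toFun x := (fun i => (x i : ZMod (m i)), fun i => x i / m i)
  invFun p i := (p.1 i).val + m i * p.2 i
  left_inv x := by
    funext i
    simp [ZMod.val_natCast, Nat.mod_add_div]
  right_inv p := by
    refine Prod.ext (funext fun i => ?_) (funext fun i => ?_)
    · simp
    · have := Nat.pos_of_neZero (m i)
      simp [Nat.add_mul_div_left _ _ this, Nat.div_eq_of_lt (ZMod.val_lt (p.1 i))]

/-- When `r` is large, a solution of `∑ aᵢ xᵢ = Mk + r` is the same as a residue vector `s` with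
`∑ aᵢ sᵢ = r` modulo `M` together with a quotient vector of sum `k`. -/
lemma card_solutions {n : ℕ} {a m : Fin n → ℕ} {M r : ℕ} [∀ i, NeZero (m i)]
    (ham : ∀ i, a i * m i = M) (hrM : r < M)
    (hbig : ((n : ℤ) - 1) * M - ∑ i, (a i : ℤ) < (r : ℤ))
    (φ : (∀ i, ZMod (m i)) →+ ZMod M)
    (hφ : ∀ z : Fin n → ℤ,
      φ (fun i => (z i : ZMod (m i))) = ((∑ i, (a i : ℤ) * z i : ℤ) : ZMod M)) (k : ℕ) :
    Nat.card {x : Fin n → ℕ // ∑ i, (a i : ℤ) * x i = ((M * k + r : ℕ) : ℤ)} =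
      Nat.card {s // φ s = (r : ZMod M)} * Nat.card {q : Fin n → ℕ // ∑ i, q i = k} := by
  rw [← Nat.card_prod]
  refine Nat.card_congr (Equiv.trans ?_ Equiv.subtypeProdEquivProd)
  refine ((divModEquiv m).symm.subtypeEquiv fun p => ?_).symm
  obtain ⟨s, q⟩ := p
  have hs : φ s = ((∑ i, a i * (s i).val : ℕ) : ZMod M) := by
    have := hφ fun i => ((s i).val : ℤ)
    simpa using this
  have hsum : ∑ i, (a i : ℤ) * ((divModEquiv m).symm (s, q) i : ℕ) =
      ((∑ i, a i * (s i).val + M * ∑ i, q i : ℕ) : ℤ) := by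
    rw [Finset.mul_sum, ← Finset.sum_add_distrib]
    push_cast
    refine Finset.sum_congr rfl fun i _ => ?_
    have : (a i : ℤ) * m i = M := by exact_mod_cast ham i
    rw [← this]
    simp only [divModEquiv, Equiv.coe_fn_symm_mk]
    push_cast
    ring
  -- Since `sᵢ ≤ mᵢ - 1`, the residue part is at most `nM - ∑ aᵢ`.
  have hle : ∑ i, a i * (s i).val + ∑ i, a i ≤ n * M := by
    rw [← Finset.sum_add_distrib]
    calc ∑ i, (a i * (s i).val + a i) ≤ ∑ _i : Fin n, M := by
          refine Finset.sum_le_sum fun i _ => ?_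
          rw [← ham i, ← Nat.mul_succ]
          exact Nat.mul_le_mul_left _ (ZMod.val_lt (s i))
      _ = n * M := by simp
  have hlt : ∑ i, a i * (s i).val < M + r := by
    zify at hle ⊢
    linarith
  rw [hsum, hs, ZMod.natCast_eq_natCast_iff', Nat.cast_inj]
  dsimp only
  generalize ∑ i, a i * (s i).val = S at *
  generalize ∑ i, q i = Q
  have hM0 : 0 < M := by omega
  constructor
  · rintro ⟨h, rfl⟩
    rw [Nat.mod_eq_of_lt hrM] at h
    have hd := Nat.mod_add_div S M
    have h0 : S / M = 0 := by
      by_contra hne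
      have := Nat.mul_le_mul_left M (Nat.one_le_iff_ne_zero.2 hne)
      omega
    rw [h0] at hd
    omega
  · intro h
    have hmod : S % M = r % M := by
      have := congrArg (· % M) h
      simpa using this
    refine ⟨hmod, ?_⟩
    rw [Nat.mod_eq_of_lt hrM] at hmod
    have hd := Nat.mod_add_div S M
    have h0 : S / M = 0 := by
      by_contra hne
      have := Nat.mul_le_mul_left M (Nat.one_le_iff_ne_zero.2 hne)
      omega
    rw [h0] at hd
    exact Nat.eq_of_mul_eq_mul_left hM0 (by omega)

end Denumerant


/-- Corollary 3.4: if `gcd(a₁,…,aₙ) = 1`, `M = lcm(a₁,…,aₙ)`,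
`r = b mod M` and `r > (n−1)M − ∑aᵢ`, then `P(r) = M^{n−1}/(a₁⋯aₙ)` and
`P(b) = (M^{n−1}/(a₁⋯aₙ)) · C(⌊b/M⌋ + n − 1, n − 1)`. -/
theorem stmt_10 (n : ℕ) (hn : 2 ≤ n) (a : Fin n → ℕ)
    (ha : ∀ i, 0 < a i) (hgcd : Finset.univ.gcd a = 1)
    (M : ℕ) (hM : M = Finset.univ.lcm a)
    (b : ℕ) (r : ℕ) (hr : r = b % M)
    (P : ℤ → ℕ)
    (hP : ∀ e : ℤ, P e = Nat.card {x : Fin n → ℕ // ∑ i, (a i : ℤ) * x i = e})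
    (hbig : ((n : ℤ) - 1) * M - ∑ i, (a i : ℤ) < (r : ℤ)) :
    (P (r : ℤ) : ℚ) = (M : ℚ) ^ (n - 1) / ∏ i, (a i : ℚ) ∧
    (P (b : ℤ) : ℚ) =
      ((M : ℚ) ^ (n - 1) / ∏ i, (a i : ℚ)) * ((b / M + n - 1).choose (n - 1) : ℚ) := by
 
  classical
  have hM0 : M ≠ 0 := by
    rw [hM, Ne, Finset.lcm_eq_zero_iff]
    rintro ⟨i, _, hi⟩
    exact (ha i).ne' hi
  have hdvd (i : Fin n) : a i ∣ M := hM ▸ Finset.dvd_lcm (Finset.mem_univ i)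
  choose m hm using hdvd
  have ham (i : Fin n) : a i * m i = M := (hm i).symm
  have hMz : NeZero M := ⟨hM0⟩
  have hmz (i : Fin n) : NeZero (m i) := ⟨fun h => hM0 (by rw [hm i, h, mul_zero])⟩
  have hrM : r < M := hr ▸ Nat.mod_lt _ (Nat.pos_of_ne_zero hM0)
  obtain ⟨φ, hφ⟩ := Denumerant.exists_residueHom ham
  have hsurj : Function.Surjective φ := by
    obtain ⟨z, hz⟩ := Denumerant.exists_bezout hgcd
    intro c
    obtain ⟨c, rfl⟩ := ZMod.intCast_surjective c
    refine ⟨_, (hφ fun i => c * z i).trans ?_⟩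
    congr 1
    calc ∑ i, (a i : ℤ) * (c * z i) = c * ∑ i, (a i : ℤ) * z i := by
          rw [Finset.mul_sum]
          exact Finset.sum_congr rfl fun i _ => by ring
      _ = c := by rw [hz, mul_one]
  have hN : (Nat.card {s // φ s = (r : ZMod M)} : ℚ) = (M : ℚ) ^ (n - 1) / ∏ i, (a i : ℚ) := by
    have h1 := Denumerant.card_residues_mul φ hsurj (r : ZMod M)
    have h2 : (∏ i, a i) * ∏ i, m i = M ^ (n - 1) * M := by
      rw [← Finset.prod_mul_distrib, Finset.prod_congr rfl fun i _ => ham i, ← pow_succ,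
        Nat.sub_add_cancel (by omega)]
      simp
    have h3 : Nat.card {s // φ s = (r : ZMod M)} * ∏ i, a i = M ^ (n - 1) := by
      refine Nat.eq_of_mul_eq_mul_right (Nat.pos_of_ne_zero hM0) ?_
      rw [← h2, ← h1]
      ring
    rw [eq_div_iff (Finset.prod_ne_zero_iff.2 fun i _ => by exact_mod_cast (ha i).ne')]
    exact_mod_cast h3
  have key (k : ℕ) : (P ((M * k + r : ℕ) : ℤ) : ℚ) =
      ((M : ℚ) ^ (n - 1) / ∏ i, (a i : ℚ)) * ((k + n - 1).choose (n - 1) : ℚ) := by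
    rw [hP, Denumerant.card_solutions ham hrM hbig φ hφ k,
      Denumerant.card_quotients n k (by omega), Nat.cast_mul, hN]
  constructor
  · simpa using key 0
  · have h := key (b / M)
    rwa [hr, Nat.div_add_mod] at h
end

section
/- Let a₁, a₂ be positive integers with gcd(a₁, a₂) = 1, let b be a nonnegative integer, and let r be the remainder of b modulo a₁a₂. Then the number P(b) of pairs (x₁, x₂) of nonnegative integers with a₁x₁ + a₂x₂ = b satisfies P(b) = ⌊b/(a₁a₂)⌋ + P(r), and moreover P(r) equals either 0 or 1. -/
/-!
Write `S c` for the set of solutions of `a * x + b * y = c` in natural numbers. As `a` and `b` are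
coprime, the first coordinates of two solutions in `S c` agree modulo `b`, and a solution is
determined by its first coordinate.

* If `c < a * b`, every solution has `x < b`, so `S c` has at most one element.
* `S (c + a * b)` has exactly one element with `x < b`: the residue of `x` is forced by the
  congruence `a * x ≡ c [MOD b]`, and `a * x < a * b ≤ c + a * b` leaves room for `y`. Its other
  elements are the translates by `(b, 0)` of the elements of `S c`. Hence
  `#S (c + a * b) = #S c + 1`.

Induction on the quotient of `c` by `a * b` gives the formula.
-/

/-- The set of pairs of natural numbers `(x, y)` with `a * x + b * y = c`. -/
def natSolutions (a b c : ℕ) : Set (ℕ × ℕ) := {p | a * p.1 + b * p.2 = c}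

lemma natSolutions_finite {a b : ℕ} (ha : 0 < a) (hb : 0 < b) (c : ℕ) :
    (natSolutions a b c).Finite := by
  refine (Set.finite_Iic ((c, c) : ℕ × ℕ)).subset ?_
  rintro ⟨x, y⟩ h
  simp only [natSolutions, Set.mem_ofPred_eq] at h
  simp only [Set.mem_Iic, Prod.mk_le_mk]
  constructor <;> nlinarith

lemma natSolutions_eq_of_lt {a b c : ℕ} (hb : 0 < b) (hab : Nat.Coprime a b)
    {p q : ℕ × ℕ} (hp : p ∈ natSolutions a b c) (hq : q ∈ natSolutions a b c)
    (hpb : p.1 < b) (hqb : q.1 < b) : p = q := by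
  obtain ⟨x, y⟩ := p
  obtain ⟨x', y'⟩ := q
  simp only [natSolutions, Set.mem_ofPred_eq] at hp hq hpb hqb
  have hmod : a * x ≡ a * x' [MOD b] := by
    have h : (a * x + b * y) % b = (a * x' + b * y') % b := by rw [hp, hq]
    simpa [Nat.ModEq] using h
  have hx : x = x' :=
    (Nat.ModEq.cancel_left_of_coprime hab.symm hmod).eq_of_lt_of_lt hpb hqb
  subst hx
  have hy : y = y' := Nat.eq_of_mul_eq_mul_left hb (by omega)
  rw [hy]

lemma ncard_natSolutions_le_one {a b c : ℕ} (hb : 0 < b)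
    (hab : Nat.Coprime a b) (hc : c < a * b) : (natSolutions a b c).ncard ≤ 1 := by
  have hlt : ∀ p ∈ natSolutions a b c, p.1 < b := by
    intro p hp
    simp only [natSolutions, Set.mem_ofPred_eq] at hp
    exact lt_of_mul_lt_mul_left (a := a) (by omega) (Nat.zero_le a)
  have hsub : (natSolutions a b c).Subsingleton := fun p hp q hq =>
    natSolutions_eq_of_lt hb hab hp hq (hlt p hp) (hlt q hq)
  have := hsub.finite.to_subtype
  exact Set.ncard_le_one_iff_subsingleton.2 hsub

lemma exists_natSolution_lt {a b : ℕ} (ha : 0 < a) (hb : 0 < b) (hab : Nat.Coprime a b) (c : ℕ) :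
    ∃ q ∈ natSolutions a b (c + a * b), q.1 < b := by
  -- The Chinese remainder theorem gives `a * x` as the multiple of `a` below `a * b` that is
  -- congruent to `c` modulo `b`.
  have hlt := Nat.chineseRemainder_lt_mul hab 0 c ha.ne' hb.ne'
  obtain ⟨hk0, hkc⟩ := (Nat.chineseRemainder hab 0 c).2
  generalize (Nat.chineseRemainder hab 0 c : ℕ) = k at hlt hk0 hkc
  obtain ⟨x, rfl⟩ := (Nat.modEq_zero_iff_dvd).1 hk0
  have hmod : a * x ≡ c + a * b [MOD b] := by
    simpa [Nat.ModEq] using hkc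
  obtain ⟨y, hy⟩ := (Nat.modEq_iff_dvd' (by omega)).1 hmod
  refine ⟨(x, y), ?_, lt_of_mul_lt_mul_left hlt (Nat.zero_le a)⟩
  simp only [natSolutions, Set.mem_ofPred_eq]
  omega

lemma ncard_natSolutions_add_mul {a b : ℕ} (ha : 0 < a) (hb : 0 < b) (hab : Nat.Coprime a b)
    (c : ℕ) : (natSolutions a b (c + a * b)).ncard = (natSolutions a b c).ncard + 1 := by
  obtain ⟨q, hq, hqb⟩ := exists_natSolution_lt ha hb hab c
  let shift : ℕ × ℕ → ℕ × ℕ := fun p => (p.1 + b, p.2)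
  have hinj : Function.Injective shift := by
    rintro ⟨x, y⟩ ⟨x', y'⟩ h
    simpa [shift] using h
  have hS : natSolutions a b (c + a * b) = insert q (shift '' natSolutions a b c) := by
    ext p
    constructor
    · intro hp
      rcases lt_or_ge p.1 b with h | h
      · exact Or.inl (natSolutions_eq_of_lt hb hab hp hq h hqb)
      · refine Or.inr ⟨(p.1 - b, p.2), ?_, ?_⟩
        · obtain ⟨x, y⟩ := p
          obtain ⟨z, rfl⟩ := Nat.exists_eq_add_of_le' h
          simp only [natSolutions, Set.mem_ofPred_eq, Nat.add_sub_cancel] at hp ⊢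
          linarith
        · simp [shift, Nat.sub_add_cancel h]
    · rintro (rfl | ⟨p, hp, rfl⟩)
      · exact hq
      · simp only [natSolutions, Set.mem_ofPred_eq, shift] at hp ⊢
        linarith
  have hq' : q ∉ shift '' natSolutions a b c := by
    rintro ⟨p, -, rfl⟩
    simp only [shift] at hqb
    omega
  rw [hS, Set.ncard_insert_of_notMem hq' ((natSolutions_finite ha hb c).image _),
    Set.ncard_image_of_injective _ hinj]

lemma ncard_natSolutions_add_mul_mul {a b : ℕ} (ha : 0 < a) (hb : 0 < b) (hab : Nat.Coprime a b)
    (c n : ℕ) :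
    (natSolutions a b (c + a * b * n)).ncard = n + (natSolutions a b c).ncard := by
  induction n with
  | zero => simp
  | succ n ih =>
    rw [Nat.mul_succ, ← Nat.add_assoc, ncard_natSolutions_add_mul ha hb hab, ih]
    omega

/-- Ehrhart, formula (3.16): if `gcd(a₁,a₂) = 1`, `b ≥ 0`, and `r` is the
remainder of `b` modulo `a₁a₂`, then `P(b) = ⌊b/(a₁a₂)⌋ + P(r)` and `P(r) ∈ {0, 1}`. -/
theorem stmt_11 (a₁ a₂ : ℕ) (ha₁ : 0 < a₁) (ha₂ : 0 < a₂)
    (hgcd : Nat.gcd a₁ a₂ = 1) (b : ℕ)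
    (r : ℕ) (hr : r = b % (a₁ * a₂))
    (P : ℤ → ℕ)
    (hP : ∀ c : ℤ, P c = Nat.card {p : ℕ × ℕ // (a₁ : ℤ) * p.1 + (a₂ : ℤ) * p.2 = c}) :
    P (b : ℤ) = b / (a₁ * a₂) + P (r : ℤ) ∧
      (P (r : ℤ) = 0 ∨ P (r : ℤ) = 1) := by
  have hab : Nat.Coprime a₁ a₂ := hgcd
  have hPn : ∀ c : ℕ, P (c : ℤ) = (natSolutions a₁ a₂ c).ncard := by
    intro c
    rw [hP, ← Nat.card_coe_set_eq]
    refine Nat.card_congr (Equiv.subtypeEquivRight fun p => ?_)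
    simp only [natSolutions, Set.mem_ofPred_eq]
    norm_cast
  have hrlt : r < a₁ * a₂ := hr ▸ Nat.mod_lt _ (Nat.mul_pos ha₁ ha₂)
  have hb : r + a₁ * a₂ * (b / (a₁ * a₂)) = b := hr ▸ Nat.mod_add_div _ _
  rw [hPn, hPn]
  constructor
  · rw [← ncard_natSolutions_add_mul_mul ha₁ ha₂ hab, hb]
  · have := ncard_natSolutions_le_one ha₂ hab hrlt
    omega
end

section
/- Let a₁, a₂ be positive integers with gcd(a₁, a₂) = 1, and let r be an integer with a₁a₂ − (a₁ + a₂) < r < a₁a₂. Then P(r) = 1, i.e. there is exactly one pair (x₁, x₂) of nonnegative integers with a₁x₁ + a₂x₂ = r. -/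
/-!
Every integer solution of `a₁ x + a₂ y = r` arises from one of them by shifting `x` by multiples
of `a₂`, so exactly one has `0 ≤ x < a₂`. For it, `a₂ y = r - a₁ x ≥ r - a₁ (a₂ - 1) > -a₂` by the
lower bound on `r`, so `y ≥ 0`. Conversely, the upper bound `r < a₁ a₂` forces `x < a₂` for every
nonnegative solution, so no other solution is nonnegative.
-/


/-- formula (3.18): if `gcd(a₁,a₂) = 1` and
`a₁a₂ − (a₁ + a₂) < r < a₁a₂`, then there is exactly one pair `(x₁,x₂)` of nonnegative
integers with `a₁x₁ + a₂x₂ = r`. -/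
theorem stmt_12 (a₁ a₂ : ℕ) (ha₁ : 0 < a₁) (ha₂ : 0 < a₂)
    (hgcd : Nat.gcd a₁ a₂ = 1) (r : ℤ)
    (hlo : (a₁ : ℤ) * a₂ - ((a₁ : ℤ) + a₂) < r) (hhi : r < (a₁ : ℤ) * a₂)
    (P : ℤ → ℕ)
    (hP : ∀ c : ℤ, P c = Nat.card {p : ℕ × ℕ // (a₁ : ℤ) * p.1 + (a₂ : ℤ) * p.2 = c}) :
    P r = 1 := by
  rw [hP, Nat.card_eq_one_iff_unique]
  have h₁ : (0 : ℤ) < a₁ := by exact_mod_cast ha₁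
  have h₂ : (0 : ℤ) < a₂ := by exact_mod_cast ha₂
  constructor
  · refine ⟨?_⟩
    rintro ⟨⟨x, y⟩, h⟩ ⟨⟨x', y'⟩, h'⟩
    simp only at h h'
    have x_lt : (x : ℤ) < a₂ := by
      refine lt_of_mul_lt_mul_left ?_ h₁.le
      have : (0 : ℤ) ≤ a₂ * y := by positivity
      linarith
    have x_lt' : (x' : ℤ) < a₂ := by
      refine lt_of_mul_lt_mul_left ?_ h₁.le
      have : (0 : ℤ) ≤ a₂ * y' := by positivity
      linarith
    have hcop : IsCoprime (a₂ : ℤ) (a₁ : ℤ) :=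
      (Nat.isCoprime_iff_coprime.mpr hgcd).symm
    have hdvd : (a₂ : ℤ) ∣ (x : ℤ) - x' :=
      hcop.dvd_of_dvd_mul_left ⟨(y' : ℤ) - y, by linear_combination h - h'⟩
    have hx : (x : ℤ) - x' = 0 :=
      Int.eq_zero_of_abs_lt_dvd hdvd (by rw [abs_lt]; constructor <;> linarith)
    have hy : (y : ℤ) = y' := by
      apply mul_left_cancel₀ h₂.ne'
      linear_combination h - h' - (a₁ : ℤ) * hx
    have hx' : x = x' := by omega
    have hy' : y = y' := by omega
    subst hx' hy'
    rfl
  · obtain ⟨u, v, huv⟩ := Nat.isCoprime_iff_coprime.mpr hgcd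
    -- Reduce the first coordinate of the Bézout solution `(r u, r v)` modulo `a₂`.
    have hdiv := Int.emod_add_mul_ediv (r * u) a₂
    have hx0 := Int.emod_nonneg (r * u) h₂.ne'
    have hxlt := Int.emod_lt_of_pos (r * u) h₂
    set x := (r * u) % (a₂ : ℤ)
    set q := (r * u) / (a₂ : ℤ)
    have hsol : (a₁ : ℤ) * x + a₂ * (r * v + a₁ * q) = r := by
      linear_combination r * huv + (a₁ : ℤ) * hdiv
    have hy0 : 0 ≤ r * v + a₁ * q := by
      have hx1 : (a₁ : ℤ) * x ≤ a₁ * (a₂ - 1) :=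
        mul_le_mul_of_nonneg_left (by linarith) h₁.le
      have : -1 < r * v + a₁ * q := by
        refine lt_of_mul_lt_mul_left ?_ h₂.le
        linarith
      linarith
    refine ⟨⟨(x.toNat, (r * v + a₁ * q).toNat), ?_⟩⟩
    simpa only [Int.toNat_of_nonneg hx0, Int.toNat_of_nonneg hy0] using hsol
end

section
/- Let a₁, a₂ be positive integers with gcd(a₁, a₂) = 1 and 1 < a₁ < a₂, and assume that either a₁ = 2, or a₁ = 3 and a₂ < 6. Let b be a nonnegative integer and let r be the remainder of b modulo a₁a₂. Then P(b) = ⌊b/(a₁a₂)⌋ + 1 if r > a₁a₂ − (a₁ + a₂), or r = a₁ + a₂, or a₁ divides r, or a₂ divides r; and P(b) = ⌊b/(a₁a₂)⌋ otherwise. -/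
/-!
If `u < a₂` and `v < a₁`, the solutions of `a₁ x + a₂ y = a₁ u + a₂ v + n a₁ a₂` are exactly
`(u + a₂ (n - t), v + a₁ t)` for `0 ≤ t ≤ n`, so there are `n + 1` of them (`card_solutions`).
Write `b = q a₁ a₂ + r`. If `r = a₁ u + a₂ v` is representable, then `P(b) = q + 1`. Otherwise
`P(r) = 0`, and `r + a₁ a₂ = a₁ u + a₂ v` with `u < a₂`, `v < a₁`, so `P(b) = q` for `q ≥ 1` too.
It remains to see that the condition in the theorem characterizes the representable `r`: for
`a₁ = 2` these are the even `r` and the `r ≥ a₂`; for `a₁ = 3` only `a₂ = 4, 5` occur.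
-/

/-- The number of solutions of `a x + c y = m` in natural numbers. -/
noncomputable def solCount (a c m : ℕ) : ℕ := Nat.card {p : ℕ × ℕ // a * p.1 + c * p.2 = m}

theorem card_solutions_s13 {a c u v n : ℕ} (ha : 0 < a) (hac : Nat.Coprime a c)
    (hu : u < c) (hv : v < a) : solCount a c (a * u + c * v + n * (a * c)) = n + 1 := by
  have key : ∀ t : Fin (n + 1),
      a * (u + c * (n - t)) + c * (v + a * t) = a * u + c * v + n * (a * c) := by
    intro t
    obtain ⟨k, hk⟩ := Nat.exists_eq_add_of_le (Nat.lt_succ_iff.mp t.2)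
    have h : n - (t : ℕ) = k := by omega
    rw [h]
    conv_rhs => rw [hk]
    ring
  let f : Fin (n + 1) → {p : ℕ × ℕ // a * p.1 + c * p.2 = a * u + c * v + n * (a * c)} :=
    fun t => ⟨(u + c * (n - t), v + a * t), key t⟩
  have hf : Function.Bijective f := by
    constructor
    · intro s t hst
      have h : v + a * (s : ℕ) = v + a * (t : ℕ) := congrArg (fun p => p.1.2) hst
      exact Fin.ext (Nat.eq_of_mul_eq_mul_left ha (by omega))
    · rintro ⟨⟨x, y⟩, hxy⟩
      dsimp only at hxy
      -- Modulo `a` the equation reads `c y ≡ c v`, so `v` is the remainder of `y`.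
      have hmod : c * y ≡ c * v [MOD a] := by
        have h : (a * x + c * y) % a = (a * u + c * v + n * (a * c)) % a := by rw [hxy]
        have e : a * u + c * v + n * (a * c) = c * v + a * (u + n * c) := by ring
        rw [e, Nat.add_mul_mod_self_left, add_comm (a * x), Nat.add_mul_mod_self_left] at h
        exact h
      have hyv : y % a = v := by
        have h : y % a = v % a := Nat.ModEq.cancel_left_of_coprime hac hmod
        rwa [Nat.mod_eq_of_lt hv] at h
      have hy : v + a * (y / a) = y := by rw [← hyv]; exact Nat.mod_add_div y a
      generalize y / a = t at hy
      subst hy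
      have hx : x + c * t = u + n * c := by
        apply Nat.eq_of_mul_eq_mul_left ha
        linarith
      have ht : t < n + 1 := by
        by_contra! h
        have : c * (n + 1) ≤ c * t := Nat.mul_le_mul_left c h
        linarith
      refine ⟨⟨t, ht⟩, Subtype.ext (Prod.ext ?_ rfl)⟩
      change u + c * (n - t) = x
      obtain ⟨k, rfl⟩ := Nat.exists_eq_add_of_le (Nat.lt_succ_iff.mp ht)
      rw [Nat.add_sub_cancel_left]
      linarith
  simpa [solCount] using (Nat.card_congr (Equiv.ofBijective f hf)).symm

/-- If the remainder `b % (a c)` is representable, then the quotient is one less than the count.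
The bounds `u < c` and `v < a` of `card_solutions` are automatic, since the remainder is
smaller than `a c`. -/
theorem solCount_of_rep {a c b u v : ℕ} (ha : 0 < a) (hc : 0 < c) (hac : Nat.Coprime a c)
    (h : b % (a * c) = a * u + c * v) : solCount a c b = b / (a * c) + 1 := by
  have hlt : b % (a * c) < a * c := Nat.mod_lt _ (Nat.mul_pos ha hc)
  have hu : u < c := Nat.lt_of_mul_lt_mul_left (a := a) (by omega)
  have hv : v < a := Nat.lt_of_mul_lt_mul_left (a := c) (by rw [mul_comm c a]; omega)
  rw [← card_solutions_s13 ha hac hu hv (n := b / (a * c)), ← h]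
  congr 1
  rw [mul_comm (b / (a * c))]
  exact (Nat.mod_add_div b (a * c)).symm

/-- If the remainder `b % (a c)` is not representable but becomes so, with coefficients `u < c` and
`v < a`, after adding `a c`, then the quotient equals the count. -/
theorem solCount_of_not_rep {a c b u v : ℕ} (ha : 0 < a) (hac : Nat.Coprime a c)
    (hu : u < c) (hv : v < a) (h : b % (a * c) + a * c = a * u + c * v)
    (hn : ∀ x y, a * x + c * y ≠ b % (a * c)) : solCount a c b = b / (a * c) := by
  have hb := Nat.mod_add_div b (a * c)
  rcases hq : b / (a * c) with _ | n
  · rw [hq, mul_zero, add_zero] at hb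
    rw [hb] at hn
    have : IsEmpty {p : ℕ × ℕ // a * p.1 + c * p.2 = b} := ⟨fun p => hn _ _ p.2⟩
    exact Nat.card_of_isEmpty
  · rw [← card_solutions_s13 ha hac hu hv (n := n), ← h]
    congr 1
    rw [hq] at hb
    linarith

/-- Proposition 3.5: let `gcd(a₁,a₂) = 1`, `1 < a₁ < a₂`, and suppose
either `a₁ = 2`, or `a₁ = 3` and `a₂ < 6`. Let `r` be the remainder of `b` modulo `a₁a₂`.
Then `P(b) = ⌊b/(a₁a₂)⌋ + 1` if `r > a₁a₂ − (a₁ + a₂)`, or `r = a₁ + a₂`, or `a₁ ∣ r`,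
or `a₂ ∣ r`; and `P(b) = ⌊b/(a₁a₂)⌋` otherwise. -/
theorem stmt_13 (a₁ a₂ : ℕ) (h₁ : 1 < a₁) (h₁₂ : a₁ < a₂)
    (hgcd : Nat.gcd a₁ a₂ = 1)
    (hcase : a₁ = 2 ∨ (a₁ = 3 ∧ a₂ < 6))
    (b : ℕ) (r : ℕ) (hr : r = b % (a₁ * a₂))
    (P : ℤ → ℕ)
    (hP : ∀ c : ℤ, P c = Nat.card {p : ℕ × ℕ // (a₁ : ℤ) * p.1 + (a₂ : ℤ) * p.2 = c}) :
    (((a₁ : ℤ) * a₂ - ((a₁ : ℤ) + a₂) < (r : ℤ) ∨ r = a₁ + a₂ ∨ a₁ ∣ r ∨ a₂ ∣ r) →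
        P (b : ℤ) = b / (a₁ * a₂) + 1) ∧
    (¬((a₁ : ℤ) * a₂ - ((a₁ : ℤ) + a₂) < (r : ℤ) ∨ r = a₁ + a₂ ∨ a₁ ∣ r ∨ a₂ ∣ r) →
        P (b : ℤ) = b / (a₁ * a₂)) := by
  have hPb : P (b : ℤ) = solCount a₁ a₂ b := by
    rw [hP]
    exact Nat.card_congr (Equiv.subtypeEquivRight fun p => by norm_cast)
  have ha : 0 < a₁ := by omega
  have hc : 0 < a₂ := by omega
  have hlt : r < a₁ * a₂ := hr ▸ Nat.mod_lt _ (Nat.mul_pos ha hc)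
  rw [hPb]
  rcases hcase with rfl | ⟨rfl, h6⟩
  · have hodd : a₂ % 2 = 1 := Nat.odd_iff.mp (Nat.coprime_two_left.mp hgcd)
    constructor
    · intro h
      have hcond : r % 2 = 0 ∨ a₂ ≤ r := by
        rcases h with h | h | h | h
        · push_cast at h
          omega
        · omega
        · omega
        · rcases Nat.eq_zero_or_pos r with h0 | h0
          · omega
          · exact Or.inr (Nat.le_of_dvd h0 h)
      by_cases h2 : r % 2 = 0
      · exact solCount_of_rep ha hc hgcd (u := r / 2) (v := 0) (by omega)
      · exact solCount_of_rep ha hc hgcd (u := (r - a₂) / 2) (v := 1) (by omega)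
    · intro h
      push Not at h
      obtain ⟨h1, -, h2, -⟩ := h
      push_cast at h1
      refine solCount_of_not_rep ha hgcd (u := (r + a₂) / 2) (v := 1)
        (by omega) (by omega) (by omega) ?_
      intro x y hxy
      rw [← hr] at hxy
      rcases y with _ | y
      · omega
      · have : a₂ * (y + 1) = a₂ * y + a₂ := by ring
        omega
  · have h45 : a₂ = 4 ∨ a₂ = 5 := by omega
    rcases h45 with rfl | rfl
    · constructor
      · intro h
        have hrep : ∃ v, v < 3 ∧ 4 * v ≤ r ∧ (r - 4 * v) % 3 = 0 :=
          ⟨r % 3, by omega, by omega, by omega⟩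
        obtain ⟨v, -, h1, h2⟩ := hrep
        exact solCount_of_rep ha hc hgcd (u := (r - 4 * v) / 3) (v := v) (by omega)
      · intro h
        have hvals : r = 1 ∨ r = 2 ∨ r = 5 := by omega
        refine solCount_of_not_rep ha hgcd (u := (r + 12 - 4 * (r % 3)) / 3) (v := r % 3)
          (by omega) (by omega) (by omega) ?_
        intro x y hxy
        have hy : y = 0 ∨ y = 1 := by omega
        omega
      -- Since `5 ≡ -1` modulo `3`, the coefficient of `5` is `-r` modulo `3`, that is `2 r % 3`.
    · constructor
      · intro h
        have hrep : ∃ v, v < 3 ∧ 5 * v ≤ r ∧ (r - 5 * v) % 3 = 0 :=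
          ⟨2 * r % 3, by omega, by omega, by omega⟩
        obtain ⟨v, -, h1, h2⟩ := hrep
        exact solCount_of_rep ha hc hgcd (u := (r - 5 * v) / 3) (v := v) (by omega)
      · intro h
        have hvals : r = 1 ∨ r = 2 ∨ r = 4 ∨ r = 7 := by omega
        refine solCount_of_not_rep ha hgcd (u := (r + 15 - 5 * (2 * r % 3)) / 3) (v := 2 * r % 3)
          (by omega) (by omega) (by omega) ?_
        intro x y hxy
        have hy : y = 0 ∨ y = 1 := by omega
        omega
end

section
/- Let n ≥ 2, let a₁,...,aₙ be positive integers, and let b be a nonnegative integer. For each integer k ≥ 0 set l'_k = ∑_{S ⊆ {1,...,n}} (−1)^{|S|} · C̄(n − 1 + k − ∑_{i∈S} aᵢ, n − 1), where C̄(a, m) denotes the binomial coefficient C(a, m) when a ≥ m and 0 otherwise (including when a < 0); in particular l'₀ = 1. Then ∑_{k=0}^{a₁+a₂+⋯+aₙ−n} l'_k · P(b − k) = C(b + n − 1, n − 1). -/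
namespace DenumerantIdentity

open PowerSeries Finset

/-- The geometric series `∑ⱼ X^(a j)`, written through its coefficients. -/
noncomputable def multiples (a : ℕ) : ℤ⟦X⟧ := mk fun k => if a ∣ k then 1 else 0

lemma multiples_mul (a : ℕ) (ha : 0 < a) : multiples a * (1 - X ^ a) = 1 := by
  ext k
  rw [mul_sub, mul_one, map_sub, coeff_mul_X_pow', coeff_one]
  simp only [multiples, coeff_mk]
  by_cases h : a ≤ k
  · have hk : k ≠ 0 := by omega
    have hd : a ∣ k - a ↔ a ∣ k := (Nat.dvd_sub_iff_left h dvd_rfl)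
    simp [h, hk, hd]
  · rcases Nat.eq_zero_or_pos k with rfl | hk
    · simp [ha.ne']
    · simp [h, hk.ne', Nat.not_dvd_of_pos_of_lt hk (not_le.mp h)]

/-- Solutions of `∑ aᵢ xᵢ = c` correspond to decompositions `c = ∑ lᵢ` with `aᵢ ∣ lᵢ`. -/
lemma coeff_prod_multiples {n : ℕ} (a : Fin n → ℕ) (ha : ∀ i, 0 < a i) (c : ℕ) :
    coeff c (∏ i, multiples (a i)) =
      (Nat.card {x : Fin n → ℕ // ∑ i, (a i : ℤ) * x i = (c : ℤ)} : ℤ) := by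
  classical
  rw [coeff_prod]
  simp only [multiples, coeff_mk, prod_boole, sum_boole, mem_univ, true_implies]
  congr 1
  rw [← Nat.card_eq_finsetCard]
  refine Nat.card_congr
    { toFun := fun l => ⟨fun i => l.1 i / a i, ?_⟩
      invFun := fun x => ⟨Finsupp.equivFunOnFinite.symm fun i => a i * x.1 i, ?_⟩
      left_inv := ?_
      right_inv := ?_ }
  · obtain ⟨l, hl⟩ := l
    rw [mem_filter, mem_finsuppAntidiag] at hl
    have h : ∑ i, a i * (l i / a i) = c := by
      rw [← hl.1.1]
      exact sum_congr rfl fun i _ => Nat.mul_div_cancel' (hl.2 i)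
    exact_mod_cast h
  · obtain ⟨x, hx⟩ := x
    rw [mem_filter, mem_finsuppAntidiag]
    refine ⟨⟨?_, subset_univ _⟩, fun i => ?_⟩
    · simp only [Finsupp.equivFunOnFinite_symm_apply_apply]
      exact_mod_cast hx
    · simp
  · rintro ⟨l, hl⟩
    rw [mem_filter] at hl
    ext i
    simpa using Nat.mul_div_cancel' (hl.2 i)
  · rintro ⟨x, hx⟩
    ext i
    simp [Nat.mul_div_cancel_left _ (ha i)]

lemma mk_card_mul_prod_eq_one {n : ℕ} (a : Fin n → ℕ) (ha : ∀ i, 0 < a i) :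
    (mk fun c : ℕ => (Nat.card {x : Fin n → ℕ // ∑ i, (a i : ℤ) * x i = (c : ℤ)} : ℤ)) *
      ∏ i, (1 - X ^ a i) = 1 := by
  have h : (mk fun c : ℕ => (Nat.card {x : Fin n → ℕ // ∑ i, (a i : ℤ) * x i = (c : ℤ)} : ℤ)) =
      ∏ i, multiples (a i) := by
    ext c
    rw [coeff_mk, coeff_prod_multiples a ha]
  rw [h, ← prod_mul_distrib]
  exact prod_eq_one fun i _ => multiples_mul _ (ha i)

lemma coeff_X_pow_mul_invOneSubPow (n : ℕ) (hn : 0 < n) (s k : ℕ) :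
    coeff k (X ^ s * (invOneSubPow ℤ n).val) =
      (Cbar ((n : ℤ) - 1 + k - (s : ℤ)) (n - 1) : ℤ) := by
  rw [invOneSubPow_val_eq_mk_sub_one_add_choose_of_pos ℤ n hn, coeff_X_pow_mul', Cbar]
  by_cases h : s ≤ k
  · have h' : ((n - 1 : ℕ) : ℤ) ≤ (n : ℤ) - 1 + k - s := by omega
    have e : ((n : ℤ) - 1 + k - s).toNat = n - 1 + (k - s) := by omega
    rw [if_pos h, if_pos h', e, coeff_mk]
  · have h' : ¬ ((n - 1 : ℕ) : ℤ) ≤ (n : ℤ) - 1 + k - s := by omega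
    rw [if_neg h, if_neg h', Nat.cast_zero]

lemma mk_subsetSum {n : ℕ} (hn : 0 < n) (a : Fin n → ℕ) :
    (mk fun k : ℕ => ∑ S : Finset (Fin n),
        (-1 : ℤ) ^ S.card * (Cbar ((n : ℤ) - 1 + k - ∑ i ∈ S, (a i : ℤ)) (n - 1) : ℤ)) =
      (∏ i, (1 - X ^ a i)) * (invOneSubPow ℤ n).val := by
  ext k
  have h : ∏ i, (1 - X ^ a i : ℤ⟦X⟧) =
      ∑ S : Finset (Fin n), C ((-1 : ℤ) ^ S.card) * X ^ (∑ i ∈ S, a i) := by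
    simp only [sub_eq_add_neg, prod_one_add, powerset_univ]
    refine sum_congr rfl fun S _ => ?_
    rw [prod_neg, prod_pow_eq_pow_sum]
    simp
  rw [h, sum_mul, map_sum, coeff_mk]
  refine sum_congr rfl fun S _ => ?_
  rw [mul_assoc, coeff_C_mul, coeff_X_pow_mul_invOneSubPow n hn]
  push_cast
  rfl

lemma mk_subsetSum_eq_prod_geom {n : ℕ} (hn : 0 < n) (a : Fin n → ℕ) :
    (mk fun k : ℕ => ∑ S : Finset (Fin n),
        (-1 : ℤ) ^ S.card * (Cbar ((n : ℤ) - 1 + k - ∑ i ∈ S, (a i : ℤ)) (n - 1) : ℤ)) =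
      ((∏ i, ∑ j ∈ range (a i), Polynomial.X ^ j : Polynomial ℤ) : ℤ⟦X⟧) := by
  have h : ((∏ i, ∑ j ∈ range (a i), Polynomial.X ^ j : Polynomial ℤ) : ℤ⟦X⟧) =
      ∏ i, ∑ j ∈ range (a i), (X : ℤ⟦X⟧) ^ j := by
    rw [← Polynomial.coeToPowerSeries.ringHom_apply, map_prod]
    simp
  have h1 : (1 - X : ℤ⟦X⟧) ^ n * (invOneSubPow ℤ n).val = 1 := by
    rw [← invOneSubPow_inv_eq_one_sub_pow]
    exact (invOneSubPow ℤ n).inv_val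
  rw [mk_subsetSum hn, h]
  simp only [← geom_sum_mul_neg, prod_mul_distrib, prod_const, card_univ, Fintype.card_fin]
  rw [mul_assoc, h1, mul_one]

lemma natDegree_prod_geom_le {n : ℕ} (a : Fin n → ℕ) (ha : ∀ i, 0 < a i) :
    (∏ i, ∑ j ∈ range (a i), Polynomial.X ^ j : Polynomial ℤ).natDegree ≤ (∑ i, a i) - n := by
  have h : ∑ i, (a i - 1) = (∑ i, a i) - n := by
    rw [sum_tsub_distrib _ fun i _ => ha i]
    simp
  rw [← h]
  refine (Polynomial.natDegree_prod_le _ _).trans (sum_le_sum fun i _ => ?_)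
  refine Polynomial.natDegree_sum_le_of_forall_le _ _ fun j hj => ?_
  rw [Polynomial.natDegree_X_pow]
  have := mem_range.mp hj
  omega

end DenumerantIdentity

open DenumerantIdentity PowerSeries in
/-- Theorem 4.1: with
`l'_k = ∑_{S ⊆ {1,…,n}} (−1)^{|S|} C̄(n − 1 + k − ∑_{i∈S} aᵢ, n − 1)` (so `l'₀ = 1`),
we have `∑_{k=0}^{a₁+⋯+aₙ−n} l'_k P(b − k) = C(b + n − 1, n − 1)`. -/
theorem stmt_14 (n : ℕ) (hn : 2 ≤ n) (a : Fin n → ℕ)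
    (ha : ∀ i, 0 < a i) (b : ℕ)
    (P : ℤ → ℕ)
    (hP : ∀ c : ℤ, P c = Nat.card {x : Fin n → ℕ // ∑ i, (a i : ℤ) * x i = c})
    (l' : ℕ → ℤ)
    (hl' : ∀ k : ℕ, l' k =
      ∑ S : Finset (Fin n),
        (-1 : ℤ) ^ S.card * (Cbar ((n : ℤ) - 1 + k - ∑ i ∈ S, (a i : ℤ)) (n - 1) : ℤ)) :
    l' 0 = 1 ∧
    ∑ k ∈ Finset.range ((∑ i, a i) - n + 1), l' k * (P ((b : ℤ) - k) : ℤ) =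
      ((b + n - 1).choose (n - 1) : ℤ) := by
  have hn0 : 0 < n := by omega
  have hgeom := mk_subsetSum_eq_prod_geom hn0 a
  have hprod := mk_subsetSum hn0 a
  have hcard := mk_card_mul_prod_eq_one a ha
  simp only [← hl'] at hgeom hprod
  simp only [← hP] at hcard
  have hcoeff (k : ℕ) : l' k =
      (∏ i, ∑ j ∈ Finset.range (a i), Polynomial.X ^ j : Polynomial ℤ).coeff k := by
    rw [← Polynomial.coeff_coe, ← hgeom, coeff_mk]
  refine ⟨?_, ?_⟩
  · rw [hcoeff, Polynomial.coeff_zero_prod]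
    refine Finset.prod_eq_one fun i _ => ?_
    simp [Polynomial.coeff_X_pow, ha i]
  have hl0 (k : ℕ) (hk : (∑ i, a i) - n < k) : l' k = 0 := by
    rw [hcoeff]
    exact Polynomial.coeff_eq_zero_of_natDegree_lt ((natDegree_prod_geom_le a ha).trans_lt hk)
  have hP0 (k : ℕ) (hk : b < k) : P ((b : ℤ) - k) = 0 := by
    rw [hP]
    have : IsEmpty {x : Fin n → ℕ // ∑ i, (a i : ℤ) * x i = (b : ℤ) - k} := by
      refine ⟨fun ⟨x, hx⟩ => ?_⟩
      have : 0 ≤ ∑ i, (a i : ℤ) * x i := by positivity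
      omega
    exact Nat.card_of_isEmpty
  have key : (mk l') * (mk fun c : ℕ => (P c : ℤ)) = (invOneSubPow ℤ n).val := by
    rw [show mk l' = _ from hprod, mul_right_comm, mul_comm (∏ i, _), hcard, one_mul]
  have hb := congrArg (coeff b) key
  rw [coeff_mul, Finset.Nat.sum_antidiagonal_eq_sum_range_succ_mk,
    invOneSubPow_val_eq_mk_sub_one_add_choose_of_pos ℤ n hn0, coeff_mk,
    show n - 1 + b = b + n - 1 by omega] at hb
  rw [← hb]
  simp only [coeff_mk]
  -- Both sums agree with the sum over all `k ≤ max b (∑ aᵢ - n)`: the extra terms vanish.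
  have hsub1 : Finset.range ((∑ i, a i) - n + 1) ⊆
      Finset.range (max b ((∑ i, a i) - n) + 1) := by
    intro k; simp only [Finset.mem_range]; omega
  have hsub2 : Finset.range (b + 1) ⊆ Finset.range (max b ((∑ i, a i) - n) + 1) := by
    intro k; simp only [Finset.mem_range]; omega
  trans ∑ k ∈ Finset.range (max b ((∑ i, a i) - n) + 1), l' k * (P ((b : ℤ) - k) : ℤ)
  · refine Finset.sum_subset hsub1 fun k _ hk => ?_
    rw [Finset.mem_range] at hk
    rw [hl0 k (by omega), zero_mul]
  · rw [← Finset.sum_subset hsub2 fun k _ hk => ?_]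
    · refine Finset.sum_congr rfl fun k hk => ?_
      rw [Finset.mem_range] at hk
      rw [Nat.cast_sub (by omega : k ≤ b)]
    · rw [Finset.mem_range] at hk
      rw [hP0 k (by omega), Nat.cast_zero, mul_zero]
end

section
/- Let n ≥ 2, let a₁,...,aₙ be positive integers, and let b be a nonnegative integer. Then ∑_{t₁=0}^{a₁−1} ∑_{t₂=0}^{a₂−1} ⋯ ∑_{tₙ=0}^{aₙ−1} P(b − ∑_{i=1}^n tᵢ) = C(b + n − 1, n − 1). -/
/-!
Euclidean division by the `a i` in each coordinate writes every `y : Fin n → ℕ` uniquely as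
`y i = a i * x i + t i` with `t i < a i`. So the left-hand side counts the `y` with `∑ i, y i = b`,
sorted by the remainder vector `t`, and the number of such `y` is `C(b + n - 1, n - 1)` by stars and
bars (`Finset.card_finsuppAntidiag_nat_eq_choose`).
-/

/-- The weak compositions of `b` whose remainder vector modulo `a` is `t` correspond, through their
quotient vectors, to the solutions of `∑ i, a i * x i = b - ∑ i, t i`. -/
theorem card_filter_mod_eq (n : ℕ) (a : Fin n → ℕ) (b : ℕ) (t : Fin n → ℕ) (ht : ∀ i, t i < a i) :
    Nat.card {x : Fin n → ℕ // ∑ i, (a i : ℤ) * x i = (b : ℤ) - ∑ i, (t i : ℤ)} =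
      ((Finset.finsuppAntidiag Finset.univ b).filter fun y : Fin n →₀ ℕ =>
        (fun i => y i % a i) = t).card := by
  rw [← Nat.card_eq_finsetCard]
  have key (x : Fin n → ℕ) : ∑ i, (a i : ℤ) * x i = (b : ℤ) - ∑ i, (t i : ℤ) ↔
      ∑ i, (a i * x i + t i) = b := by
    rw [eq_sub_iff_add_eq, ← Finset.sum_add_distrib]
    exact_mod_cast Iff.rfl
  refine Nat.card_congr
    { toFun := fun x => ⟨Finsupp.equivFunOnFinite.symm fun i => a i * x.1 i + t i, ?_⟩
      invFun := fun y => ⟨fun i => y.1 i / a i, ?_⟩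
      left_inv := ?_
      right_inv := ?_ }
  · have h := (key x.1).1 x.2
    simp only [Finset.mem_filter, Finset.mem_finsuppAntidiag]
    refine ⟨⟨by simpa using h, Finset.subset_univ _⟩, ?_⟩
    funext i
    simp [Nat.mod_eq_of_lt (ht i)]
  · obtain ⟨y, hy⟩ := y
    simp only [Finset.mem_filter, Finset.mem_finsuppAntidiag] at hy
    rw [key]
    refine (Finset.sum_congr rfl fun i _ => ?_).trans hy.1.1
    rw [← congrFun hy.2 i]
    exact Nat.div_add_mod _ _
  · rintro ⟨x, hx⟩
    ext i
    have hi : 0 < a i := (Nat.zero_le _).trans_lt (ht i)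
    simp [Nat.mul_add_div hi, Nat.div_eq_of_lt (ht i)]
  · rintro ⟨y, hy⟩
    simp only [Finset.mem_filter] at hy
    ext i
    have h := congrFun hy.2 i
    simp only [Finsupp.equivFunOnFinite_symm_apply_apply, ← h]
    exact Nat.div_add_mod _ _

/-- formula (4.3):
`∑_{t₁=0}^{a₁−1} ⋯ ∑_{tₙ=0}^{aₙ−1} P(b − ∑ tᵢ) = C(b + n − 1, n − 1)`. -/
theorem stmt_16 (n : ℕ) (hn : 2 ≤ n) (a : Fin n → ℕ)
    (ha : ∀ i, 0 < a i) (b : ℕ)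
    (P : ℤ → ℕ)
    (hP : ∀ c : ℤ, P c = Nat.card {x : Fin n → ℕ // ∑ i, (a i : ℤ) * x i = c}) :
    ∑ t ∈ Fintype.piFinset (fun i => Finset.range (a i)),
        P ((b : ℤ) - ∑ i, (t i : ℤ)) =
      (b + n - 1).choose (n - 1) := by
  have hmaps : (↑(Finset.finsuppAntidiag (Finset.univ : Finset (Fin n)) b) :
      Set (Fin n →₀ ℕ)).MapsTo (fun y i => y i % a i)
      ↑(Fintype.piFinset fun i => Finset.range (a i)) := by
    intro y _
    simpa using fun i => Nat.mod_lt (y i) (ha i)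
  have hchoose : (b + n - 1).choose (n - 1) =
      (Finset.finsuppAntidiag (Finset.univ : Finset (Fin n)) b).card := by
    rw [Finset.card_finsuppAntidiag_nat_eq_choose, Finset.card_fin, Nat.add_comm n b]
    exact Nat.choose_symm_of_eq_add (by omega)
  rw [hchoose, Finset.card_eq_sum_card_fiberwise hmaps]
  refine Finset.sum_congr rfl fun t ht => ?_
  rw [hP]
  exact card_filter_mod_eq n a b t (by simpa using ht)
end
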